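/- Let (A, {Δ(λ)}) be a split quasi-hereditary algebra over a commutative Noetherian ring R and T a characteristic tilting module. Then: (a) F(Δ̃) = {M ∈ A-mod ∩ R-proj : Ext^i_A(M, T) = 0 for all i > 0}; (b) F(∇̃) = {N ∈ A-mod ∩ R-proj : Ext^i_A(T, N) = 0 for all i > 0}; and (c) add T = F(Δ̃) ∩ F(∇̃). -/

import Mathlib

open scoped TensorProduct
open CategoryTheory

noncomputable section

section Core

variable (R : Type) [CommRing R] (A : Type) [Ring A] [Algebra R A]

/-- The action of `a : A` on an `A`-module as an `R`-linear endomorphism. -/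
def actL (M : Type) [AddCommGroup M] [Module R M] [Module A M] [IsScalarTower R A M]
    (a : A) : M →ₗ[R] M where
  toFun m := a • m
  map_add' := smul_add a
  map_smul' r m := (smul_comm r a m).symm

/-- The right `A`-module (i.e. `Aᵐᵒᵖ`-module) structure on the `R`-linear dual of a left
`A`-module `M`, given by `(aᵒᵖ • f) m = f (a • m)`. -/
instance dualModule (M : Type) [AddCommGroup M] [Module R M] [Module A M]
    [IsScalarTower R A M] : Module Aᵐᵒᵖ (M →ₗ[R] R) where
  smul a f := f.comp (actL R A M a.unop)
  one_smul f := by ext m; show f ((1 : Aᵐᵒᵖ).unop • m) = f m; simp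
  mul_smul a b f := by
    ext m
    show f ((a * b).unop • m) = f (b.unop • a.unop • m)
    simp [mul_smul]
  smul_zero a := rfl
  smul_add a f g := rfl
  add_smul a b f := by
    ext m
    show f ((a + b).unop • m) = f (a.unop • m) + f (b.unop • m)
    simp [add_smul]
  zero_smul f := by ext m; show f ((0 : Aᵐᵒᵖ).unop • m) = 0; simp

@[simp] lemma dualModule_smul_apply (M : Type) [AddCommGroup M] [Module R M] [Module A M]
    [IsScalarTower R A M] (a : Aᵐᵒᵖ) (f : M →ₗ[R] R) (m : M) :
    (a • f) m = f (a.unop • m) := rfl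

instance dualTower (M : Type) [AddCommGroup M] [Module R M] [Module A M]
    [IsScalarTower R A M] : IsScalarTower R Aᵐᵒᵖ (M →ₗ[R] R) := by
  constructor
  intro r a f
  ext m
  show f ((r • a).unop • m) = r • f (a.unop • m)
  rw [MulOpposite.unop_smul, smul_assoc, map_smul]

/-- The left `A`-module structure on the `R`-linear dual of a right `A`-module
(i.e. an `Aᵐᵒᵖ`-module) `M`, given by `(a • f) m = f (aᵒᵖ • m)`. -/
instance dualModule' (M : Type) [AddCommGroup M] [Module R M] [Module Aᵐᵒᵖ M]
    [IsScalarTower R Aᵐᵒᵖ M] : Module A (M →ₗ[R] R) where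
  smul a f := f.comp (actL R Aᵐᵒᵖ M (MulOpposite.op a))
  one_smul f := by ext m; show f (MulOpposite.op (1 : A) • m) = f m; simp
  mul_smul a b f := by
    ext m
    show f (MulOpposite.op (a * b) • m) = f (MulOpposite.op b • MulOpposite.op a • m)
    rw [MulOpposite.op_mul, mul_smul]
  smul_zero a := rfl
  smul_add a f g := rfl
  add_smul a b f := by
    ext m
    show f (MulOpposite.op (a + b) • m) = f (MulOpposite.op a • m) + f (MulOpposite.op b • m)
    rw [MulOpposite.op_add, add_smul, map_add]
  zero_smul f := by ext m; show f (MulOpposite.op (0 : A) • m) = 0; simp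

@[simp] lemma dualModule'_smul_apply (M : Type) [AddCommGroup M] [Module R M] [Module Aᵐᵒᵖ M]
    [IsScalarTower R Aᵐᵒᵖ M] (a : A) (f : M →ₗ[R] R) (m : M) :
    (a • f) m = f (MulOpposite.op a • m) := rfl

instance dualTower' (M : Type) [AddCommGroup M] [Module R M] [Module Aᵐᵒᵖ M]
    [IsScalarTower R Aᵐᵒᵖ M] : IsScalarTower R A (M →ₗ[R] R) := by
  constructor
  intro r a f
  ext m
  show f (MulOpposite.op (r • a) • m) = r • f (MulOpposite.op a • m)
  rw [MulOpposite.op_smul, smul_assoc, map_smul]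

variable (Λ : Type) [Fintype Λ] [PartialOrder Λ]

/-- Data witnessing that `X` is isomorphic to `Δ(λ) ⊗_R U` for some `λ ∈ S` and some finitely
generated projective `R`-module `U`. -/
structure TensorFactor (Δ : Λ → Type) [∀ l, AddCommGroup (Δ l)] [∀ l, Module R (Δ l)]
    [∀ l, Module A (Δ l)] [∀ l, IsScalarTower R A (Δ l)]
    (S : Set Λ) (X : Type) [AddCommGroup X] [Module A X] : Type 1 where
  lam : Λ
  mem : lam ∈ S
  U : ModuleCat.{0} R
  fin : Module.Finite R U
  proj : Module.Projective R U
  iso : X ≃ₗ[A] (TensorProduct R (Δ lam) U)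

/-- `M` belongs to `F(Δ̃_S)`: it is a finitely generated `A`-module with a finite filtration
whose factors are of the form `Δ(λ) ⊗_R U`, `λ ∈ S`, `U` a finitely generated projective
`R`-module. -/
def InFilt (Δ : Λ → Type) [∀ l, AddCommGroup (Δ l)] [∀ l, Module R (Δ l)]
    [∀ l, Module A (Δ l)] [∀ l, IsScalarTower R A (Δ l)]
    (S : Set Λ) (M : Type) [AddCommGroup M] [Module A M] : Prop :=
  Module.Finite A M ∧
  ∃ (n : ℕ) (c : Fin (n + 1) → Submodule A M), c 0 = ⊥ ∧ c (Fin.last n) = ⊤ ∧ Monotone c ∧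
    ∀ i : Fin n, Nonempty (TensorFactor R A Λ Δ S
      (↥(c i.succ) ⧸ (Submodule.comap (c i.succ).subtype (c i.castSucc))))

/-- Data witnessing that `X` is isomorphic to `F(λ)` for some `λ ∈ S`. -/
structure PlainFactor (F : Λ → Type) [∀ l, AddCommGroup (F l)] [∀ l, Module A (F l)]
    (S : Set Λ) (X : Type) [AddCommGroup X] [Module A X] : Type 1 where
  lam : Λ
  mem : lam ∈ S
  iso : X ≃ₗ[A] F lam

/-- `M` has a finite filtration with factors among the modules `F(λ)`, `λ ∈ S`. -/
def InFiltPlain (F : Λ → Type) [∀ l, AddCommGroup (F l)] [∀ l, Module A (F l)]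
    (S : Set Λ) (M : Type) [AddCommGroup M] [Module A M] : Prop :=
  Module.Finite A M ∧
  ∃ (n : ℕ) (c : Fin (n + 1) → Submodule A M), c 0 = ⊥ ∧ c (Fin.last n) = ⊤ ∧ Monotone c ∧
    ∀ i : Fin n, Nonempty (PlainFactor A Λ F S
      (↥(c i.succ) ⧸ (Submodule.comap (c i.succ).subtype (c i.castSucc))))

/-- `X` is a direct summand of `Y` (as `A`-modules). -/
def IsDirectSummand (X Y : Type) [AddCommGroup X] [Module A X] [AddCommGroup Y]
    [Module A Y] : Prop :=
  ∃ (i : X →ₗ[A] Y) (p : Y →ₗ[A] X), p.comp i = LinearMap.id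

/-- `X` belongs to the additive closure `add T`. -/
def InAdd (T : Type) [AddCommGroup T] [Module A T] (X : Type) [AddCommGroup X]
    [Module A X] : Prop :=
  ∃ n : ℕ, IsDirectSummand A X (Fin n → T)

/-- A split quasi-hereditary structure on the `R`-algebra `A` with standard modules
`Δ(λ)`, `λ ∈ Λ` (following Rouquier's module-theoretic definition). -/
structure SplitQH (Δ : Λ → Type) [∀ l, AddCommGroup (Δ l)] [∀ l, Module R (Δ l)]
    [∀ l, Module A (Δ l)] [∀ l, IsScalarTower R A (Δ l)] : Type 1 where
  algFin : Module.Finite R A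
  algProj : Module.Projective R A
  deltaFinA : ∀ l, Module.Finite A (Δ l)
  deltaFinR : ∀ l, Module.Finite R (Δ l)
  deltaProjR : ∀ l, Module.Projective R (Δ l)
  hom_le : ∀ l m : Λ, (∃ f : Δ l →ₗ[A] Δ m, f ≠ 0) → l ≤ m
  endIso : ∀ l, Nonempty ((Module.End A (Δ l)) ≃ₐ[R] R)
  P : Λ → ModuleCat.{0} A
  P_proj : ∀ l, Module.Projective A (P l)
  P_fin : ∀ l, Module.Finite A (P l)
  epi : ∀ l, (P l : Type) →ₗ[A] Δ l
  epi_surj : ∀ l, Function.Surjective (epi l)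
  ker_filt : ∀ l, InFilt R A Λ Δ {m | l < m} ↥(LinearMap.ker (epi l))
  add_gen : ∀ (Q : ModuleCat.{0} A), Module.Finite A Q → Module.Projective A Q →
    InAdd A (∀ l, (P l : Type)) Q

/-- Vanishing of `Ext^i_A(M, N)` (computed in the abelian category of `A`-modules). -/
def extVanish (M : Type) [AddCommGroup M] [Module A M] (N : Type) [AddCommGroup N]
    [Module A N] (i : ℕ) : Prop :=
  Subsingleton (((Ext ℤ (ModuleCat.{0} A) i).obj
    (Opposite.op (ModuleCat.of A M))).obj (ModuleCat.of A N))

/-- `∇` is a family of costandard modules for the split quasi-hereditary algebra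
`(A, {Δ(λ)})`: the `R`-linear duals `D∇(λ)` make `A^op` split quasi-hereditary (with the same
poset), and the `Ext`-orthogonality relations with the standard modules hold. -/
def IsCostandard (Δ : Λ → Type) [∀ l, AddCommGroup (Δ l)] [∀ l, Module R (Δ l)]
    [∀ l, Module A (Δ l)] [∀ l, IsScalarTower R A (Δ l)]
    (N : Λ → Type) [∀ l, AddCommGroup (N l)] [∀ l, Module R (N l)]
    [∀ l, Module A (N l)] [∀ l, IsScalarTower R A (N l)] : Prop :=
  Nonempty (SplitQH R Aᵐᵒᵖ Λ (fun l => (N l →ₗ[R] R))) ∧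
  (∀ l, Nonempty ((Δ l →ₗ[A] N l) ≃ₗ[R] R)) ∧
  (∀ l m, l ≠ m → ∀ f : Δ l →ₗ[A] N m, f = 0) ∧
  (∀ l m : Λ, ∀ i : ℕ, 0 < i → extVanish A (Δ l) (N m) i)

/-- A bundled family of costandard modules. -/
structure CostandardFamily (Δ : Λ → Type) [∀ l, AddCommGroup (Δ l)] [∀ l, Module R (Δ l)]
    [∀ l, Module A (Δ l)] [∀ l, IsScalarTower R A (Δ l)] : Type 1 where
  Nab : Λ → Type
  [acg : ∀ l, AddCommGroup (Nab l)]
  [modR : ∀ l, Module R (Nab l)]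
  [modA : ∀ l, Module A (Nab l)]
  [tower : ∀ l, IsScalarTower R A (Nab l)]
  cost : IsCostandard R A Λ Δ Nab

attribute [instance] CostandardFamily.acg CostandardFamily.modR CostandardFamily.modA
  CostandardFamily.tower

/-- `T` is a family of (partial) tilting modules forming a characteristic tilting module
`⊕ T(λ)`: each `T(λ)` admits an exact sequence `0 → Δ(λ) → T(λ) → X(λ) → 0` with
`X(λ) ∈ F(Δ̃_{μ<λ})` and an exact sequence `0 → Y(λ) → T(λ) → ∇(λ) → 0` with
`Y(λ) ∈ F(∇̃_{μ<λ})`. -/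
def IsCharTilting (Δ : Λ → Type) [∀ l, AddCommGroup (Δ l)] [∀ l, Module R (Δ l)]
    [∀ l, Module A (Δ l)] [∀ l, IsScalarTower R A (Δ l)]
    (N : Λ → Type) [∀ l, AddCommGroup (N l)] [∀ l, Module R (N l)]
    [∀ l, Module A (N l)] [∀ l, IsScalarTower R A (N l)]
    (T : Λ → Type) [∀ l, AddCommGroup (T l)] [∀ l, Module A (T l)] : Prop :=
  ∀ l : Λ,
    (∃ f : Δ l →ₗ[A] T l, Function.Injective f ∧
      InFilt R A Λ Δ {m | m < l} ((T l) ⧸ LinearMap.range f)) ∧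
    (∃ g : T l →ₗ[A] N l, Function.Surjective g ∧
      InFilt R A Λ N {m | m < l} ↥(LinearMap.ker g))

end Core

end

noncomputable section

/-!
Let `l` be maximal among the indices with `Hom_A(Δ(l), M) ≠ 0`. Maps `P(l) → M` then factor through
`Δ(l)`, and embedding `∇(l)` into the Nakayama module `Hom_R(Hom_A(P(l), A), R)` gives
`Hom_A(M, ∇(l)) ≅ Hom_R(Hom_A(Δ(l), M), R)`. Two inductions on the set of such indices follow.

If `Ext¹(Δ(m), N) = 0` for all `m`, the coevaluation `N → ∇(l) ⊗ Hom_A(Δ(l), N)` is surjective and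
its kernel again has vanishing `Ext¹(Δ(m), -)`, so `N` has a costandard filtration. If
`Ext¹(M, ∇(m)) = 0` for all `m`, the cokernel of the evaluation `Δ(l) ⊗ Hom_A(Δ(l), M) → M` has
vanishing `Ext¹(-, ∇(m))`. The evaluation is split injective over `R`: every linear form extends
along it, because `Hom_R(A, R)`, which represents linear forms, has a costandard filtration by the
first induction.

The sequences defining `T(l)` turn `Ext`-vanishing against `T` into `Ext`-vanishing against every
`Δ(l)` or `∇(l)`, and show that a homomorphism from a module with a standard filtration to one with
a costandard filtration factors through `add T`. For the identity this is the third assertion.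
-/

section ExtVanishing

variable {A : Type} [Ring A] {M N X : Type} [AddCommGroup M] [Module A M]
  [AddCommGroup N] [Module A N] [AddCommGroup X] [Module A X]

/-- Vanishing of the derived-category group `Ext^i(M, N)`, for which Mathlib provides long exact
sequences; `extVanish_succ_iff_extZero` compares it with `extVanish`. -/
def ExtZero (A : Type) [Ring A] (M N : Type) [AddCommGroup M] [Module A M]
    [AddCommGroup N] [Module A N] (i : ℕ) : Prop :=
  ∀ x : Abelian.Ext (ModuleCat.of A M) (ModuleCat.of A N) i, x = 0

-- Both groups are computed by the same projective resolution.
lemma extVanish_succ_iff_extZero (i : ℕ) : extVanish A M N (i + 1) ↔ ExtZero A M N (i + 1) := by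
  let P := projectiveResolution (ModuleCat.of A M)
  have key : extVanish A M N (i + 1) ↔ ∀ f : P.complex.X (i + 1) ⟶ ModuleCat.of A N,
      P.complex.d (i + 2) (i + 1) ≫ f = 0 →
      ∃ g : P.complex.X i ⟶ ModuleCat.of A N, P.complex.d (i + 1) i ≫ g = f := by
    rw [extVanish,
      (P.isoExt (R := ℤ) (i + 1) (ModuleCat.of A N)).toLinearEquiv.toEquiv.subsingleton_congr,
      ← ModuleCat.isZero_iff_subsingleton, ← HomologicalComplex.exactAt_iff_isZero_homology,
      HomologicalComplex.exactAt_iff' _ i (i + 1) (i + 2) (by simp) (by simp),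
      ShortComplex.moduleCat_exact_iff]
    rfl
  rw [key]
  constructor
  · intro h x
    obtain ⟨f, hf, rfl⟩ := P.extMk_surjective x (i + 2) rfl
    exact (P.extMk_eq_zero_iff f (i + 2) rfl hf i rfl).2 (h f hf)
  · intro h f hf
    exact (P.extMk_eq_zero_iff f (i + 2) rfl hf i rfl).1 (h _)

lemma forall_extVanish_iff :
    (∀ i : ℕ, 0 < i → extVanish A M N i) ↔ ∀ n, ExtZero A M N (n + 1) := by
  simp only [← extVanish_succ_iff_extZero]
  exact ⟨fun h n => h (n + 1) n.succ_pos, fun h i hi => Nat.sub_add_cancel hi ▸ h (i - 1)⟩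

lemma ExtZero.of_projective [Module.Projective A M] (n : ℕ) : ExtZero A M N (n + 1) := by
  have : Projective (ModuleCat.of A M) := (IsProjective.iff_projective (R := A) M).1 inferInstance
  exact fun x => x.eq_zero_of_projective

lemma ExtZero.of_isDirectSummand_left {n : ℕ} (h : IsDirectSummand A X M)
    (hM : ExtZero A M N n) : ExtZero A X N n := by
  intro x
  obtain ⟨i, p, hpi⟩ := h
  have hid : 𝟙 (ModuleCat.of A X) = ModuleCat.ofHom i ≫ ModuleCat.ofHom p := by
    rw [← ModuleCat.ofHom_comp, hpi, ModuleCat.ofHom_id]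
  rw [← Abelian.Ext.mk₀_id_comp x, hid, ← Abelian.Ext.mk₀_comp_mk₀,
    Abelian.Ext.comp_assoc _ _ _ (zero_add 0) (zero_add n) (by simp),
    hM ((Abelian.Ext.mk₀ (ModuleCat.ofHom p)).comp x (zero_add n)), Abelian.Ext.comp_zero]

lemma ExtZero.of_isDirectSummand_right {n : ℕ} (h : IsDirectSummand A X N)
    (hN : ExtZero A M N n) : ExtZero A M X n := by
  intro x
  obtain ⟨i, p, hpi⟩ := h
  have hid : 𝟙 (ModuleCat.of A X) = ModuleCat.ofHom i ≫ ModuleCat.ofHom p := by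
    rw [← ModuleCat.ofHom_comp, hpi, ModuleCat.ofHom_id]
  rw [← Abelian.Ext.comp_mk₀_id x, hid, ← Abelian.Ext.mk₀_comp_mk₀,
    ← Abelian.Ext.comp_assoc _ _ _ (add_zero n) (zero_add 0) (by simp),
    hN (x.comp (Abelian.Ext.mk₀ (ModuleCat.ofHom i)) (add_zero n)), Abelian.Ext.zero_comp]

lemma ExtZero.of_subsingleton_left [Subsingleton M] (n : ℕ) : ExtZero A M N n := by
  intro x
  rw [← Abelian.Ext.mk₀_id_comp x,
    (ModuleCat.isZero_of_subsingleton (ModuleCat.of A M)).eq_zero_of_src (𝟙 _),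
    Abelian.Ext.mk₀_zero, Abelian.Ext.zero_comp]

lemma ExtZero.of_subsingleton_right [Subsingleton N] (n : ℕ) : ExtZero A M N n := by
  intro x
  rw [← Abelian.Ext.comp_mk₀_id x,
    (ModuleCat.isZero_of_subsingleton (ModuleCat.of A N)).eq_zero_of_src (𝟙 _),
    Abelian.Ext.mk₀_zero, Abelian.Ext.comp_zero]

end ExtVanishing

section ShortExactSequences

variable {A : Type} [Ring A] {M' M M'' N : Type} [AddCommGroup M'] [Module A M']
  [AddCommGroup M] [Module A M] [AddCommGroup M''] [Module A M''] [AddCommGroup N] [Module A N]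
  {f : M' →ₗ[A] M} {g : M →ₗ[A] M''}

/-- A short exact sequence `0 → M' → M → M'' → 0` of modules, given by its two maps. -/
structure IsSES (f : M' →ₗ[A] M) (g : M →ₗ[A] M'') : Prop where
  inj : Function.Injective f
  exact : Function.Exact f g
  surj : Function.Surjective g

namespace IsSES

lemma ker_subtype (hg : Function.Surjective g) : IsSES (LinearMap.ker g).subtype g :=
  ⟨Submodule.injective_subtype _, LinearMap.exact_subtype_ker_map g, hg⟩

lemma range_mkQ (hf : Function.Injective f) : IsSES f (LinearMap.range f).mkQ :=
  ⟨hf, LinearMap.exact_map_mkQ_range f, Submodule.mkQ_surjective _⟩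

lemma exists_factor_left (s : IsSES f g) (u : N →ₗ[A] M) (hu : g ∘ₗ u = 0) :
    ∃ v : N →ₗ[A] M', f ∘ₗ v = u := by
  have hmem : ∀ x, u x ∈ LinearMap.range f := fun x => (s.exact _).1 (LinearMap.congr_fun hu x)
  refine ⟨(LinearEquiv.ofInjective f s.inj).symm ∘ₗ u.codRestrict _ hmem, ?_⟩
  ext x
  exact congrArg Subtype.val ((LinearEquiv.ofInjective f s.inj).apply_symm_apply ⟨u x, hmem x⟩)

lemma exists_factor_right (s : IsSES f g) (u : M →ₗ[A] N) (hu : u ∘ₗ f = 0) :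
    ∃ v : M'' →ₗ[A] N, v ∘ₗ g = u := by
  have hle : LinearMap.ker g ≤ LinearMap.ker u := by
    rw [s.exact.linearMap_ker_eq]
    exact LinearMap.range_le_ker_iff.2 hu
  refine ⟨(LinearMap.ker g).liftQ u hle ∘ₗ (g.quotKerEquivOfSurjective s.surj).symm, ?_⟩
  ext x
  exact congrArg ((LinearMap.ker g).liftQ u hle)
    ((g.quotKerEquivOfSurjective s.surj).symm_apply_apply (Submodule.Quotient.mk x))

/-- The short complex in `ModuleCat` attached to a short exact sequence of modules, through which
the long exact `Ext`-sequences of Mathlib apply. -/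
abbrev complex (s : IsSES f g) : ShortComplex (ModuleCat.{0} A) :=
  ShortComplex.mk (ModuleCat.ofHom f) (ModuleCat.ofHom g) (by
    ext m
    exact s.exact.apply_apply_eq_zero m)

lemma shortExact (s : IsSES f g) : s.complex.ShortExact where
  exact := (ShortComplex.ShortExact.moduleCat_exact_iff_function_exact _).2 s.exact
  mono_f := (ModuleCat.mono_iff_injective _).2 s.inj
  epi_g := (ModuleCat.epi_iff_surjective _).2 s.surj

lemma extZero_contravariant₁ (s : IsSES f g) {n : ℕ} (h : ExtZero A M N n)
    (h'' : ExtZero A M'' N (n + 1)) : ExtZero A M' N n := by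
  intro x
  obtain ⟨y, rfl⟩ := Abelian.Ext.contravariant_sequence_exact₁ s.shortExact
    (ModuleCat.of A N) x (add_comm 1 n) (h'' _)
  rw [h y, Abelian.Ext.comp_zero]

lemma extZero_contravariant₂ (s : IsSES f g) {n : ℕ} (h' : ExtZero A M' N n)
    (h'' : ExtZero A M'' N n) : ExtZero A M N n := by
  intro x
  obtain ⟨y, rfl⟩ := Abelian.Ext.contravariant_sequence_exact₂ s.shortExact
    (ModuleCat.of A N) x (h' _)
  rw [h'' y, Abelian.Ext.comp_zero]

lemma extZero_contravariant₃ (s : IsSES f g) {n : ℕ} (h' : ExtZero A M' N n)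
    (h : ExtZero A M N (n + 1)) : ExtZero A M'' N (n + 1) := by
  intro x
  obtain ⟨y, rfl⟩ := Abelian.Ext.contravariant_sequence_exact₃ s.shortExact
    (ModuleCat.of A N) x (h _) (add_comm 1 n)
  rw [h' y, Abelian.Ext.comp_zero]

lemma extZero_covariant₂ (s : IsSES f g) {n : ℕ} (h' : ExtZero A N M' n)
    (h'' : ExtZero A N M'' n) : ExtZero A N M n := by
  intro x
  obtain ⟨y, rfl⟩ := Abelian.Ext.covariant_sequence_exact₂ (ModuleCat.of A N) s.shortExact
    x (h'' _)
  rw [h' y, Abelian.Ext.zero_comp]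

lemma extZero_covariant₃ (s : IsSES f g) {n : ℕ} (h : ExtZero A N M n)
    (h' : ExtZero A N M' (n + 1)) : ExtZero A N M'' n := by
  intro x
  obtain ⟨y, rfl⟩ := Abelian.Ext.covariant_sequence_exact₃ (ModuleCat.of A N) s.shortExact
    x rfl (h' _)
  rw [h y, Abelian.Ext.zero_comp]

lemma exists_extend (s : IsSES f g) (h'' : ExtZero A M'' N 1) (u : M' →ₗ[A] N) :
    ∃ v : M →ₗ[A] N, v ∘ₗ f = u := by
  obtain ⟨y, hy⟩ := Abelian.Ext.contravariant_sequence_exact₁ s.shortExact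
    (ModuleCat.of A N) (Abelian.Ext.mk₀ (ModuleCat.ofHom u)) (add_zero 1) (h'' _)
  obtain ⟨v, rfl⟩ := (Abelian.Ext.mk₀_bijective _ _).2 y
  rw [Abelian.Ext.mk₀_comp_mk₀] at hy
  exact ⟨v.hom, congrArg ModuleCat.Hom.hom ((Abelian.Ext.mk₀_bijective _ _).1 hy)⟩

lemma exists_lift (s : IsSES f g) (h' : ExtZero A N M' 1) (u : N →ₗ[A] M'') :
    ∃ v : N →ₗ[A] M, g ∘ₗ v = u := by
  obtain ⟨y, hy⟩ := Abelian.Ext.covariant_sequence_exact₃ (ModuleCat.of A N) s.shortExact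
    (Abelian.Ext.mk₀ (ModuleCat.ofHom u)) (zero_add 1) (h' _)
  obtain ⟨v, rfl⟩ := (Abelian.Ext.mk₀_bijective _ _).2 y
  rw [Abelian.Ext.mk₀_comp_mk₀] at hy
  exact ⟨v.hom, congrArg ModuleCat.Hom.hom ((Abelian.Ext.mk₀_bijective _ _).1 hy)⟩

lemma extZero_one_of_extend (s : IsSES f g)
    (h : ∀ u : M' →ₗ[A] N, ∃ v : M →ₗ[A] N, v ∘ₗ f = u) (h1 : ExtZero A M N 1) :
    ExtZero A M'' N 1 := by
  intro x
  obtain ⟨y, rfl⟩ := Abelian.Ext.contravariant_sequence_exact₃ s.shortExact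
    (ModuleCat.of A N) x (h1 _) (add_zero 1)
  obtain ⟨u, rfl⟩ := (Abelian.Ext.mk₀_bijective _ _).2 y
  obtain ⟨v, hv⟩ := h u.hom
  have hu : u = s.complex.f ≫ ModuleCat.ofHom v := by
    ext m
    exact (LinearMap.congr_fun hv m).symm
  rw [hu, ← Abelian.Ext.mk₀_comp_mk₀, s.shortExact.extClass_comp_assoc]

lemma extZero_one_of_lift (s : IsSES f g)
    (h : ∀ u : N →ₗ[A] M'', ∃ v : N →ₗ[A] M, g ∘ₗ v = u) (h1 : ExtZero A N M 1) :
    ExtZero A N M' 1 := by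
  intro x
  obtain ⟨y, rfl⟩ := Abelian.Ext.covariant_sequence_exact₁ (ModuleCat.of A N) s.shortExact
    x (h1 _) (zero_add 1)
  obtain ⟨u, rfl⟩ := (Abelian.Ext.mk₀_bijective _ _).2 y
  obtain ⟨v, hv⟩ := h u.hom
  have hu : u = ModuleCat.ofHom v ≫ s.complex.g := by
    ext m
    exact (LinearMap.congr_fun hv m).symm
  rw [hu, ← Abelian.Ext.mk₀_comp_mk₀, Abelian.Ext.comp_assoc _ _ _ (zero_add 0) (zero_add 1)
      (by simp), s.shortExact.comp_extClass, Abelian.Ext.comp_zero]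

lemma exists_retraction (s : IsSES f g) [Module.Projective A M''] :
    ∃ r : M →ₗ[A] M', r ∘ₗ f = LinearMap.id :=
  s.exists_extend (ExtZero.of_projective 0) LinearMap.id

lemma projective_left (s : IsSES f g) [Module.Projective A M] [Module.Projective A M''] :
    Module.Projective A M' := by
  obtain ⟨r, hr⟩ := s.exists_retraction
  exact Module.Projective.of_split f r hr

lemma projective_mid (s : IsSES f g) [Module.Projective A M'] [Module.Projective A M''] :
    Module.Projective A M := by
  obtain ⟨e, -⟩ : ∃ e : M ≃ₗ[A] M' × M'', f = e.symm ∘ₗ LinearMap.inl A M' M'' ∧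
      g = LinearMap.snd A M' M'' ∘ₗ e :=
    (s.exact.split_tfae'.out 1 2).1 (And.intro s.surj s.exists_retraction)
  exact Module.Projective.of_equiv e.symm

lemma projective_right_of_retraction (s : IsSES f g) [Module.Projective A M]
    (hf : ∃ r : M →ₗ[A] M', r ∘ₗ f = LinearMap.id) : Module.Projective A M'' := by
  obtain ⟨-, t, ht⟩ : Function.Injective f ∧ ∃ t : M'' →ₗ[A] M, g ∘ₗ t = LinearMap.id :=
    (s.exact.split_tfae'.out 1 0).1 (And.intro s.surj hf)
  exact Module.Projective.of_split t g ht

end IsSES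

end ShortExactSequences

section DirectSummands

variable {A : Type} [Ring A] {M N X : Type} [AddCommGroup M] [Module A M]
  [AddCommGroup N] [Module A N] [AddCommGroup X] [Module A X]

lemma IsDirectSummand.of_equiv (e : M ≃ₗ[A] N) : IsDirectSummand A M N :=
  ⟨e, e.symm, e.symm_comp⟩

lemma IsDirectSummand.trans (h : IsDirectSummand A M N) (h' : IsDirectSummand A N X) :
    IsDirectSummand A M X := by
  obtain ⟨i, p, hpi⟩ := h
  obtain ⟨j, q, hqj⟩ := h'
  refine ⟨j ∘ₗ i, p ∘ₗ q, ?_⟩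
  rw [LinearMap.comp_assoc, ← LinearMap.comp_assoc i j q, hqj, LinearMap.id_comp, hpi]

lemma isDirectSummand_pi {ι : Type} (F : ι → Type) [∀ i, AddCommGroup (F i)]
    [∀ i, Module A (F i)] (i : ι) : IsDirectSummand A (F i) (∀ i, F i) := by
  classical
  exact ⟨LinearMap.single A F i, LinearMap.proj i, LinearMap.proj_comp_single_same A F i⟩

lemma IsDirectSummand.finite (h : IsDirectSummand A M N) [Module.Finite A N] :
    Module.Finite A M := by
  obtain ⟨i, p, hpi⟩ := h
  exact Module.Finite.of_surjective p fun x => ⟨i x, LinearMap.congr_fun hpi x⟩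

lemma IsDirectSummand.projective (h : IsDirectSummand A M N) [Module.Projective A N] :
    Module.Projective A M := by
  obtain ⟨i, p, hpi⟩ := h
  exact Module.Projective.of_split i p hpi

lemma exists_dual_basis (M : Type) [AddCommGroup M] [Module A M] [Module.Finite A M]
    [Module.Projective A M] :
    ∃ (n : ℕ) (p : Fin n → M) (q : Fin n → (M →ₗ[A] A)), ∀ x, ∑ i, q i x • p i = x := by
  obtain ⟨n, f, g, -, -, hfg⟩ := Module.Finite.exists_comp_eq_id_of_projective A M
  refine ⟨n, fun i => f (Pi.single i 1), fun i => LinearMap.proj i ∘ₗ g, fun x => ?_⟩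
  calc ∑ i, g x i • f (Pi.single i 1) = f (∑ i, g x i • Pi.single i 1) := by
        simp only [map_sum, map_smul]
    _ = f (g x) := by rw [← pi_eq_sum_univ' (g x)]
    _ = x := LinearMap.congr_fun hfg x

end DirectSummands

section Tensor

variable {R : Type} [CommRing R] {A : Type} [Ring A] [Algebra R A]
  {X U : Type} [AddCommGroup X] [Module R X] [Module A X] [IsScalarTower R A X]
  [AddCommGroup U] [Module R U]

variable (R A X) in
/-- The map `x ↦ x ⊗ u`, as an `R`-linear function of `u`. -/
def tensorIn : U →ₗ[R] X →ₗ[A] X ⊗[R] U where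
  toFun u := (TensorProduct.AlgebraTensorModule.mk R A X U).flip u
  map_add' u v := by ext; simp
  map_smul' r u := by ext; simp

variable (A X) in
/-- The map `x ⊗ u ↦ q(u) x`. -/
def tensorOut (q : U →ₗ[R] R) : X ⊗[R] U →ₗ[A] X :=
  TensorProduct.AlgebraTensorModule.rid R A X ∘ₗ TensorProduct.AlgebraTensorModule.lTensor A X q

@[simp] lemma tensorIn_apply (u : U) (x : X) : tensorIn R A X u x = x ⊗ₜ[R] u := rfl

@[simp] lemma tensorOut_tmul (q : U →ₗ[R] R) (x : X) (u : U) :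
    tensorOut A X q (x ⊗ₜ[R] u) = q u • x := by
  simp [tensorOut]

lemma tensorOut_comp_tensorIn (q : U →ₗ[R] R) (u : U) :
    tensorOut A X q ∘ₗ tensorIn R A X u = q u • LinearMap.id := by
  ext
  simp

lemma sum_tensorIn_tensorOut {n : ℕ} {u : Fin n → U} {q : Fin n → (U →ₗ[R] R)}
    (h : ∀ v, ∑ i, q i v • u i = v) (z : X ⊗[R] U) :
    ∑ i, tensorIn R A X (u i) (tensorOut A X (q i) z) = z := by
  induction z with
  | zero => simp only [map_zero, Finset.sum_const_zero]
  | add z w hz hw => simp only [map_add, Finset.sum_add_distrib, hz, hw]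
  | tmul x v =>
    simp only [tensorOut_tmul, tensorIn_apply, TensorProduct.smul_tmul]
    rw [← TensorProduct.tmul_sum, h v]

lemma inAdd_tensor (X U : Type) [AddCommGroup X] [Module R X] [Module A X]
    [IsScalarTower R A X] [AddCommGroup U] [Module R U] [Module.Finite R U]
    [Module.Projective R U] : InAdd A X (X ⊗[R] U) := by
  obtain ⟨n, u, q, h⟩ := exists_dual_basis (A := R) U
  refine ⟨n, LinearMap.pi fun i => tensorOut A X (q i),
    ∑ i, tensorIn R A X (u i) ∘ₗ LinearMap.proj i, LinearMap.ext fun z => ?_⟩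
  simpa only [LinearMap.comp_apply, LinearMap.sum_apply, LinearMap.proj_apply, LinearMap.pi_apply,
    LinearMap.id_apply] using sum_tensorIn_tensorOut h z

end Tensor

section ExtensionClosedClasses

variable {A : Type} [Ring A]

/-- A class of `A`-modules that contains the zero modules and is closed under extensions (hence
under isomorphisms and finite direct sums). -/
structure IsExtensionClosed (A : Type) [Ring A]
    (C : ∀ (M : Type) [AddCommGroup M] [Module A M], Prop) : Prop where
  of_subsingleton : ∀ (M : Type) [AddCommGroup M] [Module A M] [Subsingleton M], C M
  extension : ∀ {M' M M'' : Type} [AddCommGroup M'] [Module A M'] [AddCommGroup M] [Module A M]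
    [AddCommGroup M''] [Module A M''] {f : M' →ₗ[A] M} {g : M →ₗ[A] M''},
    IsSES f g → C M' → C M'' → C M

namespace IsExtensionClosed

variable {C : ∀ (M : Type) [AddCommGroup M] [Module A M], Prop} (hC : IsExtensionClosed A C)
  {M N : Type} [AddCommGroup M] [Module A M] [AddCommGroup N] [Module A N]

include hC

lemma of_equiv (e : M ≃ₗ[A] N) (hM : C M) : C N := by
  refine hC.extension (f := e.toLinearMap) (g := (0 : N →ₗ[A] PUnit)) ⟨e.injective, ?_, ?_⟩ hM
    (hC.of_subsingleton PUnit)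
  · exact fun y => ⟨fun _ => e.surjective y, fun _ => rfl⟩
  · exact fun _ => ⟨0, rfl⟩

lemma prod (hM : C M) (hN : C N) : C (M × N) :=
  hC.extension ⟨LinearMap.inl_injective, .inl_snd, LinearMap.snd_surjective⟩ hM hN

lemma pi {ι : Type} [Finite ι] (F : ι → Type) [∀ i, AddCommGroup (F i)] [∀ i, Module A (F i)]
    (hF : ∀ i, C (F i)) : C (∀ i, F i) := by
  revert F
  induction ι using Finite.induction_empty_option with
  | of_equiv e ih =>
    exact fun F _ _ hF => hC.of_equiv (LinearEquiv.piCongrLeft A F e) (ih _ fun i => hF (e i))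
  | h_empty => exact fun F _ _ _ => hC.of_subsingleton _
  | h_option ih =>
    exact fun F _ _ hF => hC.of_equiv (LinearEquiv.piOptionEquivProd A).symm
      (hC.prod (hF none) (ih _ fun i => hF (some i)))

end IsExtensionClosed

end ExtensionClosedClasses

section Filtrations

variable {R : Type} [CommRing R] {A : Type} [Ring A] [Algebra R A] {Λ : Type}
  {Δ : Λ → Type} [∀ l, AddCommGroup (Δ l)] [∀ l, Module R (Δ l)]
  [∀ l, Module A (Δ l)] [∀ l, IsScalarTower R A (Δ l)] {S : Set Λ}
  {M' M M'' : Type} [AddCommGroup M'] [Module A M']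
  [AddCommGroup M] [Module A M] [AddCommGroup M''] [Module A M'']
  {f : M' →ₗ[A] M} {g : M →ₗ[A] M''}

variable (R A Λ Δ S) in
/-- `c ≤ d` are consecutive terms of a filtration in the sense of `InFilt`: the quotient `d / c`,
presented by a surjection from `d` with kernel `c`, is `Δ(λ) ⊗ U` with `λ ∈ S` and `U` finitely
generated projective over `R`. -/
def FiltStep (M : Type) [AddCommGroup M] [Module A M] (c d : Submodule A M) : Prop :=
  c ≤ d ∧ ∃ l ∈ S, ∃ U : ModuleCat.{0} R, Module.Finite R U ∧ Module.Projective R U ∧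
    ∃ p : d →ₗ[A] Δ l ⊗[R] U, Function.Surjective p ∧ ∀ x : d, p x = 0 ↔ (x : M) ∈ c

lemma nonempty_tensorFactor_iff {c d : Submodule A M} (hcd : c ≤ d) :
    Nonempty (TensorFactor R A Λ Δ S (↥d ⧸ c.comap d.subtype)) ↔ FiltStep R A Λ Δ S M c d := by
  constructor
  · rintro ⟨⟨l, hl, U, hU, hU', e⟩⟩
    exact ⟨hcd, l, hl, U, hU, hU', e.toLinearMap ∘ₗ Submodule.mkQ _,
      e.surjective.comp (Submodule.mkQ_surjective _), fun x => by simp⟩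
  · rintro ⟨-, l, hl, U, hU, hU', p, hp, hpc⟩
    have hker : c.comap d.subtype = LinearMap.ker p := Submodule.ext fun x => (hpc x).symm
    exact ⟨⟨l, hl, U, hU, hU', (Submodule.quotEquivOfEq _ _ hker).trans
      (p.quotKerEquivOfSurjective hp)⟩⟩

lemma exists_chain_of_reflTransGen {d : Submodule A M}
    (h : Relation.ReflTransGen (FiltStep R A Λ Δ S M) ⊥ d) :
    ∃ (n : ℕ) (c : Fin (n + 1) → Submodule A M), c 0 = ⊥ ∧ c (Fin.last n) = d ∧
      ∀ i : Fin n, FiltStep R A Λ Δ S M (c i.castSucc) (c i.succ) := by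
  induction h with
  | refl => exact ⟨0, fun _ => ⊥, rfl, rfl, fun i => i.elim0⟩
  | @tail c' d' _ hs ih =>
    obtain ⟨n, c, h0, hn, hc⟩ := ih
    refine ⟨n + 1, Fin.snoc c d', ?_, Fin.snoc_last _ _, fun i => ?_⟩
    · exact (Fin.snoc_castSucc (α := fun _ => Submodule A M) d' c 0).trans h0
    · induction i using Fin.lastCases with
      | last => rwa [Fin.succ_last, Fin.snoc_last, Fin.snoc_castSucc, hn]
      | cast i =>
        rw [Fin.snoc_castSucc, Fin.succ_castSucc, Fin.snoc_castSucc]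
        exact hc i

lemma inFilt_iff_reflTransGen : InFilt R A Λ Δ S M ↔
    Module.Finite A M ∧ Relation.ReflTransGen (FiltStep R A Λ Δ S M) ⊥ ⊤ := by
  refine and_congr_right fun _ => ⟨?_, fun h => ?_⟩
  · rintro ⟨n, c, h0, hn, hc, hs⟩
    have hreach : ∀ i : Fin (n + 1), Relation.ReflTransGen (FiltStep R A Λ Δ S M) ⊥ (c i) := by
      intro i
      induction i using Fin.induction with
      | zero => rw [h0]
      | succ i ih =>
        exact ih.tail ((nonempty_tensorFactor_iff (hc i.castSucc_lt_succ.le)).1 (hs i))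
    exact hn ▸ hreach (Fin.last n)
  · obtain ⟨n, c, h0, hn, hs⟩ := exists_chain_of_reflTransGen h
    exact ⟨n, c, h0, hn, Fin.monotone_iff_le_succ.2 fun i => (hs i).1,
      fun i => (nonempty_tensorFactor_iff (hs i).1).2 (hs i)⟩

lemma FiltStep.map (hf : Function.Injective f) {c d : Submodule A M'}
    (h : FiltStep R A Λ Δ S M' c d) : FiltStep R A Λ Δ S M (c.map f) (d.map f) := by
  obtain ⟨hcd, l, hl, U, hU, hU', p, hp, hpc⟩ := h
  refine ⟨Submodule.map_mono hcd, l, hl, U, hU, hU',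
    p ∘ₗ (Submodule.equivMapOfInjective f hf d).symm, hp.comp (LinearEquiv.surjective _), ?_⟩
  intro x
  obtain ⟨y, rfl⟩ := (Submodule.equivMapOfInjective f hf d).surjective x
  simp [hpc, hf.eq_iff]

lemma FiltStep.comap (hg : Function.Surjective g) {c d : Submodule A M''}
    (h : FiltStep R A Λ Δ S M'' c d) : FiltStep R A Λ Δ S M (c.comap g) (d.comap g) := by
  obtain ⟨hcd, l, hl, U, hU, hU', p, hp, hpc⟩ := h
  refine ⟨Submodule.comap_mono hcd, l, hl, U, hU, hU',
    p ∘ₗ g.restrict (p := d.comap g) (q := d) (fun x hx => hx), hp.comp ?_, fun x => hpc _⟩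
  rintro ⟨y, hy⟩
  obtain ⟨x, rfl⟩ := hg y
  exact ⟨⟨x, hy⟩, rfl⟩

lemma InFilt.extension (s : IsSES f g) (h' : InFilt R A Λ Δ S M')
    (h'' : InFilt R A Λ Δ S M'') : InFilt R A Λ Δ S M := by
  obtain ⟨_, h'⟩ := inFilt_iff_reflTransGen.1 h'
  obtain ⟨_, h''⟩ := inFilt_iff_reflTransGen.1 h''
  have below : Relation.ReflTransGen (FiltStep R A Λ Δ S M) ⊥ (LinearMap.range f) := by
    rw [← Submodule.map_bot f, ← Submodule.map_top]
    exact Relation.ReflTransGen.lift (Submodule.map f) (fun _ _ h => h.map s.inj) _ _ h'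
  have above : Relation.ReflTransGen (FiltStep R A Λ Δ S M) (LinearMap.range f) ⊤ := by
    rw [← s.exact.linearMap_ker_eq, ← Submodule.comap_bot, ← Submodule.comap_top g]
    exact Relation.ReflTransGen.lift (Submodule.comap g) (fun _ _ h => h.comap s.surj) _ _ h''
  exact inFilt_iff_reflTransGen.2 ⟨Module.Finite.of_exact s.exact s.surj, below.trans above⟩

variable (R A Λ Δ S) in
lemma InFilt.isExtensionClosed : IsExtensionClosed A (fun M => InFilt R A Λ Δ S M) where
  of_subsingleton M := inFilt_iff_reflTransGen.2
    ⟨inferInstance, by rw [Subsingleton.elim (⊥ : Submodule A M) ⊤]⟩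
  extension := InFilt.extension

lemma InFilt.of_equiv_tensor {l : Λ} (hl : l ∈ S) [Module.Finite A M] (U : Type) [AddCommGroup U]
    [Module R U] [Module.Finite R U] [Module.Projective R U] (e : M ≃ₗ[A] Δ l ⊗[R] U) :
    InFilt R A Λ Δ S M := by
  refine inFilt_iff_reflTransGen.2 ⟨‹_›, .single ⟨bot_le, l, hl, ModuleCat.of R U, ‹_›, ‹_›,
    e.toLinearMap ∘ₗ Submodule.topEquiv.toLinearMap,
    e.surjective.comp Submodule.topEquiv.surjective, fun x => ?_⟩⟩
  simp

lemma InFilt.of_mem {l : Λ} (hl : l ∈ S) [Module.Finite A (Δ l)] : InFilt R A Λ Δ S (Δ l) :=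
  InFilt.of_equiv_tensor hl R (TensorProduct.AlgebraTensorModule.rid R A (Δ l)).symm

lemma InFilt.tensor {l : Λ} (hl : l ∈ S) [Module.Finite A (Δ l)] (U : Type) [AddCommGroup U]
    [Module R U] [Module.Finite R U] [Module.Projective R U] :
    InFilt R A Λ Δ S (Δ l ⊗[R] U) :=
  have : Module.Finite A (Δ l ⊗[R] U) :=
    (inAdd_tensor (Δ l) U).choose_spec.finite
  InFilt.of_equiv_tensor hl U (LinearEquiv.refl A _)

lemma InFilt.mono {S' : Set Λ} (hS : S ⊆ S') (h : InFilt R A Λ Δ S M) :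
    InFilt R A Λ Δ S' M := by
  obtain ⟨hfin, h⟩ := inFilt_iff_reflTransGen.1 h
  refine inFilt_iff_reflTransGen.2 ⟨hfin, Relation.ReflTransGen.mono ?_ _ _ h⟩
  rintro c d ⟨hcd, l, hl, factor⟩
  exact ⟨hcd, l, hS hl, factor⟩

lemma InFilt.induction_on {C : ∀ (M : Type) [AddCommGroup M] [Module A M], Prop}
    (h : InFilt R A Λ Δ S M) (hC : IsExtensionClosed A C)
    (summand : ∀ {X Y : Type} [AddCommGroup X] [Module A X] [AddCommGroup Y] [Module A Y],
      IsDirectSummand A X Y → C Y → C X)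
    (base : ∀ l ∈ S, C (Δ l)) : C M := by
  suffices hmem : ∀ d : Submodule A M, Relation.ReflTransGen (FiltStep R A Λ Δ S M) ⊥ d → C d from
    hC.of_equiv Submodule.topEquiv (hmem ⊤ (inFilt_iff_reflTransGen.1 h).2)
  intro d hd
  induction hd with
  | refl => exact hC.of_subsingleton _
  | @tail c d _ hs ih =>
    obtain ⟨hcd, l, hl, U, _, _, p, hp, hpc⟩ := hs
    have s : IsSES (Submodule.inclusion hcd) p :=
      ⟨Submodule.inclusion_injective hcd, LinearMap.exact_iff.2 (Submodule.ext fun x => by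
        simp [hpc, Submodule.range_inclusion]), hp⟩
    obtain ⟨n, hn⟩ := inAdd_tensor (R := R) (A := A) (Δ l) U
    exact hC.extension s ih (summand hn (hC.pi _ fun _ => base l hl))

end Filtrations

section ConsequencesOfFiltration

variable {R : Type} [CommRing R] {A : Type} [Ring A] [Algebra R A] {Λ : Type}
  {Δ : Λ → Type} [∀ l, AddCommGroup (Δ l)] [∀ l, Module R (Δ l)]
  [∀ l, Module A (Δ l)] [∀ l, IsScalarTower R A (Δ l)] {S : Set Λ}
  {M N N' : Type} [AddCommGroup M] [Module A M]
  [AddCommGroup N] [Module A N] [AddCommGroup N'] [Module A N']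

lemma InFilt.extZero_left (h : InFilt R A Λ Δ S M) {n : ℕ}
    (hΔ : ∀ l ∈ S, ExtZero A (Δ l) N n) : ExtZero A M N n :=
  h.induction_on (C := fun M _ _ => ExtZero A M N n)
    { of_subsingleton := fun _ _ _ _ => ExtZero.of_subsingleton_left n
      extension := fun s h' h'' => s.extZero_contravariant₂ h' h'' }
    ExtZero.of_isDirectSummand_left hΔ

lemma InFilt.extZero_right (h : InFilt R A Λ Δ S M) {n : ℕ}
    (hΔ : ∀ l ∈ S, ExtZero A N (Δ l) n) : ExtZero A N M n :=
  h.induction_on (C := fun M _ _ => ExtZero A N M n)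
    { of_subsingleton := fun _ _ _ _ => ExtZero.of_subsingleton_right n
      extension := fun s h' h'' => s.extZero_covariant₂ h' h'' }
    ExtZero.of_isDirectSummand_right hΔ

lemma InFilt.hom_eq_zero (h : InFilt R A Λ Δ S M)
    (hΔ : ∀ l ∈ S, ∀ u : Δ l →ₗ[A] N, u = 0) : ∀ u : M →ₗ[A] N, u = 0 := by
  refine h.induction_on (C := fun M _ _ => ∀ u : M →ₗ[A] N, u = 0)
    { of_subsingleton := fun M _ _ _ u => Subsingleton.elim u 0
      extension := fun s h' h'' u => ?_ } ?_ hΔ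
  · obtain ⟨v, rfl⟩ := s.exists_factor_right u (h' _)
    rw [h'' v, LinearMap.zero_comp]
  · rintro X Y _ _ _ _ ⟨i, p, hpi⟩ hY u
    rw [← LinearMap.comp_id u, ← hpi, ← LinearMap.comp_assoc, hY (u ∘ₗ p), LinearMap.zero_comp]

lemma InFilt.exists_lift (h : InFilt R A Λ Δ S M) {p : N →ₗ[A] N'}
    (hΔ : ∀ l ∈ S, ExtZero A (Δ l) N 1)
    (hp : ∀ l ∈ S, ∀ u : Δ l →ₗ[A] N', ∃ v : Δ l →ₗ[A] N, p ∘ₗ v = u) (u : M →ₗ[A] N') :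
    ∃ v : M →ₗ[A] N, p ∘ₗ v = u := by
  suffices hM : ExtZero A M N 1 ∧ ∀ u : M →ₗ[A] N', ∃ v : M →ₗ[A] N, p ∘ₗ v = u from hM.2 u
  refine h.induction_on (C := fun M _ _ => ExtZero A M N 1 ∧
      ∀ u : M →ₗ[A] N', ∃ v : M →ₗ[A] N, p ∘ₗ v = u)
    { of_subsingleton := fun M _ _ _ => ⟨ExtZero.of_subsingleton_left 1,
        fun u => ⟨0, Subsingleton.elim _ u⟩⟩
      extension := ?_ } ?_ fun l hl => ⟨hΔ l hl, hp l hl⟩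
  · intro M' M M'' _ _ _ _ _ _ f g s h' h''
    refine ⟨s.extZero_contravariant₂ h'.1 h''.1, fun u => ?_⟩
    obtain ⟨v', hv'⟩ := h'.2 (u ∘ₗ f)
    obtain ⟨v, rfl⟩ := s.exists_extend h''.1 v'
    obtain ⟨w, hw⟩ := s.exists_factor_right (u - p ∘ₗ v) (by
      rw [LinearMap.sub_comp, ← hv', LinearMap.comp_assoc, sub_self])
    obtain ⟨t, rfl⟩ := h''.2 w
    exact ⟨v + t ∘ₗ g, by rw [LinearMap.comp_add, ← LinearMap.comp_assoc, hw, add_sub_cancel]⟩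
  · rintro X Y _ _ _ _ hXY ⟨hY, hlift⟩
    refine ⟨hY.of_isDirectSummand_left hXY, fun u => ?_⟩
    obtain ⟨i, q, hqi⟩ := hXY
    obtain ⟨v, hv⟩ := hlift (u ∘ₗ q)
    exact ⟨v ∘ₗ i, by rw [← LinearMap.comp_assoc, hv, LinearMap.comp_assoc, hqi, LinearMap.comp_id]⟩

lemma InFilt.exists_extend (h : InFilt R A Λ Δ S M) {j : N →ₗ[A] N'}
    (hΔ : ∀ l ∈ S, ExtZero A N' (Δ l) 1)
    (hj : ∀ l ∈ S, ∀ u : N →ₗ[A] Δ l, ∃ v : N' →ₗ[A] Δ l, v ∘ₗ j = u) (u : N →ₗ[A] M) :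
    ∃ v : N' →ₗ[A] M, v ∘ₗ j = u := by
  suffices hM : ExtZero A N' M 1 ∧ ∀ u : N →ₗ[A] M, ∃ v : N' →ₗ[A] M, v ∘ₗ j = u from hM.2 u
  refine h.induction_on (C := fun M _ _ => ExtZero A N' M 1 ∧
      ∀ u : N →ₗ[A] M, ∃ v : N' →ₗ[A] M, v ∘ₗ j = u)
    { of_subsingleton := fun M _ _ _ => ⟨ExtZero.of_subsingleton_right 1,
        fun u => ⟨0, Subsingleton.elim _ u⟩⟩
      extension := ?_ } ?_ fun l hl => ⟨hΔ l hl, hj l hl⟩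
  · intro M' M M'' _ _ _ _ _ _ f g s h' h''
    refine ⟨s.extZero_covariant₂ h'.1 h''.1, fun u => ?_⟩
    obtain ⟨v'', hv''⟩ := h''.2 (g ∘ₗ u)
    obtain ⟨v, rfl⟩ := s.exists_lift h'.1 v''
    obtain ⟨w, hw⟩ := s.exists_factor_left (u - v ∘ₗ j) (by
      rw [LinearMap.comp_sub, ← hv'', LinearMap.comp_assoc, sub_self])
    obtain ⟨t, rfl⟩ := h'.2 w
    exact ⟨v + f ∘ₗ t, by rw [LinearMap.add_comp, LinearMap.comp_assoc, hw, add_sub_cancel]⟩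
  · rintro X Y _ _ _ _ hXY ⟨hY, hext⟩
    refine ⟨hY.of_isDirectSummand_right hXY, fun u => ?_⟩
    obtain ⟨i, q, hqi⟩ := hXY
    obtain ⟨v, hv⟩ := hext (i ∘ₗ u)
    exact ⟨q ∘ₗ v, by rw [LinearMap.comp_assoc, hv, ← LinearMap.comp_assoc, hqi, LinearMap.id_comp]⟩

end ConsequencesOfFiltration

section FinProj

variable {R : Type} [CommRing R] {A : Type} [Ring A] [Algebra R A]
  {M' M M'' : Type} [AddCommGroup M'] [Module A M'] [AddCommGroup M] [Module A M]
  [AddCommGroup M''] [Module A M''] {f : M' →ₗ[A] M} {g : M →ₗ[A] M''}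

/-- The `A`-module `M` is finitely generated and projective over `R`. The `R`-module structure is
determined by the `A`-module structure and is quantified over here, because the submodules and
quotients met below do not come with one. -/
def FinProj (R : Type) [CommRing R] (A : Type) [Ring A] [Algebra R A] (M : Type)
    [AddCommGroup M] [Module A M] : Prop :=
  ∃ _ : Module R M, IsScalarTower R A M ∧ Module.Finite R M ∧ Module.Projective R M

lemma exists_isScalarTower (R : Type) [CommRing R] (A : Type) [Ring A] [Algebra R A] (M : Type)
    [AddCommGroup M] [Module A M] : ∃ _ : Module R M, IsScalarTower R A M :=
  ⟨Module.compHom M (algebraMap R A), IsScalarTower.of_compHom R A M⟩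

lemma finProj_iff [modM : Module R M] [IsScalarTower R A M] :
    FinProj R A M ↔ Module.Finite R M ∧ Module.Projective R M := by
  refine ⟨?_, fun h => ⟨modM, ‹_›, h⟩⟩
  rintro ⟨modM', tower, h⟩
  have hmod : modM' = modM := Module.ext' _ _ fun r m =>
    (@algebraMap_smul R _ A _ _ M _ _ modM' tower r m).symm.trans
      (@algebraMap_smul R _ A _ _ M _ _ modM _ r m)
  subst hmod
  exact h

lemma finProj_iff_of_finite [Module R M] [IsScalarTower R A M] [Module.Finite R A] :
    FinProj R A M ↔ Module.Finite A M ∧ Module.Projective R M := by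
  rw [finProj_iff]
  exact and_congr_left fun _ =>
    ⟨fun _ => .of_restrictScalars_finite R A M, fun _ => .trans A M⟩

lemma IsSES.restrictScalars [Module R M'] [IsScalarTower R A M'] [Module R M]
    [IsScalarTower R A M] [Module R M''] [IsScalarTower R A M''] (s : IsSES f g) :
    IsSES (f.restrictScalars R) (g.restrictScalars R) :=
  ⟨s.inj, s.exact, s.surj⟩

lemma FinProj.of_isDirectSummand (h : IsDirectSummand A M' M) (hM : FinProj R A M) :
    FinProj R A M' := by
  obtain ⟨_, _, _, _⟩ := hM
  obtain ⟨_, _⟩ := exists_isScalarTower R A M'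
  have hR : IsDirectSummand R M' M := by
    obtain ⟨i, p, hpi⟩ := h
    exact ⟨i.restrictScalars R, p.restrictScalars R, LinearMap.ext fun x => congr($hpi x)⟩
  exact finProj_iff.2 ⟨hR.finite, hR.projective⟩

variable (R A) in
lemma FinProj.isExtensionClosed : IsExtensionClosed A (fun M => FinProj R A M) where
  of_subsingleton := by
    intro M _ _ _
    obtain ⟨_, _⟩ := exists_isScalarTower R A M
    exact finProj_iff.2 ⟨inferInstance, inferInstance⟩
  extension := by
    intro M' M M'' _ _ _ _ _ _ f g s h' h''
    obtain ⟨_, _, _, _⟩ := h'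
    obtain ⟨_, _, _, _⟩ := h''
    obtain ⟨_, _⟩ := exists_isScalarTower R A M
    have sR := s.restrictScalars (R := R)
    exact finProj_iff.2 ⟨Module.Finite.of_exact sR.exact sR.surj, sR.projective_mid⟩

lemma IsSES.finProj_left (s : IsSES f g) (h : FinProj R A M) (h'' : FinProj R A M'') :
    FinProj R A M' := by
  obtain ⟨_, _, _, _⟩ := h
  obtain ⟨_, _, _, _⟩ := h''
  obtain ⟨_, _⟩ := exists_isScalarTower R A M'
  have sR := s.restrictScalars (R := R)
  obtain ⟨r, hr⟩ := sR.exists_retraction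
  have hfin : Module.Finite R M' := Module.Finite.of_surjective r fun x => ⟨f x, congr($hr x)⟩
  exact finProj_iff.2 ⟨hfin, sR.projective_left⟩

lemma IsSES.finProj_right_of_retraction [Module R M'] [IsScalarTower R A M'] [Module R M]
    [IsScalarTower R A M] (s : IsSES f g) (h : FinProj R A M)
    (hf : ∃ r : M →ₗ[R] M', r ∘ₗ f.restrictScalars R = LinearMap.id) : FinProj R A M'' := by
  obtain ⟨_, _⟩ := finProj_iff.1 h
  obtain ⟨_, _⟩ := exists_isScalarTower R A M''
  have sR := s.restrictScalars (R := R)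
  exact finProj_iff.2 ⟨.of_surjective _ sR.surj, sR.projective_right_of_retraction hf⟩

lemma InFilt.finProj {Λ : Type} {Δ : Λ → Type} [∀ l, AddCommGroup (Δ l)] [∀ l, Module R (Δ l)]
    [∀ l, Module A (Δ l)] [∀ l, IsScalarTower R A (Δ l)] {S : Set Λ}
    (h : InFilt R A Λ Δ S M) (hΔ : ∀ l ∈ S, FinProj R A (Δ l)) : FinProj R A M :=
  h.induction_on (FinProj.isExtensionClosed R A) FinProj.of_isDirectSummand hΔ

end FinProj

section HomModules

variable {R : Type} [CommRing R] {A : Type} [Ring A] [Algebra R A]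
  {M' M M'' N : Type} [AddCommGroup M'] [Module A M'] [AddCommGroup M] [Module A M]
  [AddCommGroup M''] [Module A M''] [AddCommGroup N] [Module R N] [Module A N]
  [IsScalarTower R A N] {f : M' →ₗ[A] M} {g : M →ₗ[A] M''}

lemma IsDirectSummand.hom (h : IsDirectSummand A M' M) :
    IsDirectSummand R (M' →ₗ[A] N) (M →ₗ[A] N) := by
  obtain ⟨i, p, hpi⟩ := h
  refine ⟨LinearMap.lcomp R N p, LinearMap.lcomp R N i, LinearMap.ext fun u => ?_⟩
  simp only [LinearMap.comp_apply, LinearMap.lcomp_apply', LinearMap.comp_assoc, hpi,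
    LinearMap.comp_id, LinearMap.id_apply]

lemma IsSES.lcomp (s : IsSES f g) (h'' : ExtZero A M'' N 1) :
    IsSES (LinearMap.lcomp R N g) (LinearMap.lcomp R N f) := by
  refine ⟨fun u v huv => (LinearMap.cancel_right s.surj).1 huv,
    fun u => ⟨s.exists_factor_right u, ?_⟩, s.exists_extend h''⟩
  rintro ⟨v, rfl⟩
  rw [LinearMap.lcomp_apply', LinearMap.lcomp_apply', LinearMap.comp_assoc,
    s.exact.linearMap_comp_eq_zero, LinearMap.comp_zero]

lemma InFilt.finProj_hom {Λ : Type} {Δ : Λ → Type} [∀ l, AddCommGroup (Δ l)]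
    [∀ l, Module R (Δ l)] [∀ l, Module A (Δ l)] [∀ l, IsScalarTower R A (Δ l)] {S : Set Λ}
    (h : InFilt R A Λ Δ S M) (hΔ : ∀ l ∈ S, ExtZero A (Δ l) N 1)
    (hH : ∀ l ∈ S, Module.Finite R (Δ l →ₗ[A] N) ∧ Module.Projective R (Δ l →ₗ[A] N)) :
    Module.Finite R (M →ₗ[A] N) ∧ Module.Projective R (M →ₗ[A] N) := by
  suffices hM : ExtZero A M N 1 ∧
      Module.Finite R (M →ₗ[A] N) ∧ Module.Projective R (M →ₗ[A] N) from hM.2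
  refine h.induction_on (C := fun M _ _ => ExtZero A M N 1 ∧
      Module.Finite R (M →ₗ[A] N) ∧ Module.Projective R (M →ₗ[A] N))
    { of_subsingleton := fun M _ _ _ =>
        ⟨ExtZero.of_subsingleton_left 1, inferInstance, inferInstance⟩
      extension := ?_ } ?_ fun l hl => ⟨hΔ l hl, hH l hl⟩
  · rintro M' M M'' _ _ _ _ _ _ f g s ⟨h', _, _⟩ ⟨h'', _, _⟩
    have sHom := s.lcomp (R := R) h''
    exact ⟨s.extZero_contravariant₂ h' h'', Module.Finite.of_exact sHom.exact sHom.surj,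
      sHom.projective_mid⟩
  · rintro X Y _ _ _ _ hXY ⟨hY, _, _⟩
    exact ⟨hY.of_isDirectSummand_left hXY, hXY.hom.finite, hXY.hom.projective⟩

variable (R A M N) in
lemma finProj_hom_of_projective [Module.Finite A M] [Module.Projective A M] [Module.Finite R N]
    [Module.Projective R N] :
    Module.Finite R (M →ₗ[A] N) ∧ Module.Projective R (M →ₗ[A] N) := by
  obtain ⟨n, p, i, -, -, hpi⟩ := Module.Finite.exists_comp_eq_id_of_projective A M
  have e : (Fin n → N) ≃ₗ[R] ((Fin n → A) →ₗ[A] N) :=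
    (LinearEquiv.piCongrRight fun _ => LinearMap.ringLmapEquivSelf A R N).symm.trans
      (LinearMap.lsum A (fun _ => A) R)
  have hM : IsDirectSummand R (M →ₗ[A] N) (Fin n → N) :=
    IsDirectSummand.trans (IsDirectSummand.hom ⟨i, p, hpi⟩) (IsDirectSummand.of_equiv e.symm)
  have hproj : Module.Projective R (Fin n → N) :=
    .of_equiv (DirectSum.linearEquivFunOnFintype R (Fin n) fun _ => N)
  exact ⟨hM.finite, hM.projective⟩

end HomModules

section Nakayama

variable {R : Type} [CommRing R] {A : Type} [Ring A] [Algebra R A]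
  {P M N : Type} [AddCommGroup P] [Module A P]
  [AddCommGroup M] [Module R M] [Module A M] [IsScalarTower R A M]
  [AddCommGroup N] [Module R N] [Module A N] [IsScalarTower R A N]

variable (R A P) in
/-- The Nakayama functor `Hom_R(Hom_A(P, A), R)`. For `P` finitely generated projective, it
represents `M ↦ Hom_R(Hom_A(P, M), R)`. -/
abbrev Nakayama : Type := (P →ₗ[A] A) →ₗ[R] R

/-- The homomorphism `M → Nakayama R A P` corresponding to a linear form on `Hom_A(P, M)`. -/
def nakayamaHom (η : (P →ₗ[A] M) →ₗ[R] R) : M →ₗ[A] Nakayama R A P where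
  toFun m := η ∘ₗ LinearMap.compRight R (LinearMap.toSpanSingleton A M m)
  map_add' m m' := by
    ext g
    simp [LinearMap.compRight_apply, LinearMap.add_comp, LinearMap.toSpanSingleton_add]
  map_smul' a m := by
    ext g
    simp only [LinearMap.comp_apply, LinearMap.compRight_apply, RingHom.id_apply,
      dualModule'_smul_apply]
    congr 1
    ext x
    simp [mul_smul]

lemma nakayamaHom_apply (η : (P →ₗ[A] M) →ₗ[R] R) (m : M) (g : P →ₗ[A] A) :
    nakayamaHom η m g = η (LinearMap.toSpanSingleton A M m ∘ₗ g) := rfl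

lemma nakayamaHom_comp (η : (P →ₗ[A] N) →ₗ[R] R) (k : M →ₗ[A] N) :
    nakayamaHom η ∘ₗ k = nakayamaHom (η ∘ₗ LinearMap.compRight R k) := by
  ext m g
  simp only [LinearMap.comp_apply, nakayamaHom_apply, LinearMap.compRight_apply,
    ← LinearMap.comp_assoc, LinearMap.comp_toSpanSingleton]

lemma sum_toSpanSingleton_comp {n : ℕ} {p : Fin n → P} {q : Fin n → (P →ₗ[A] A)}
    (hpq : ∀ x, ∑ i, q i x • p i = x) (g : P →ₗ[A] M) :
    ∑ i, LinearMap.toSpanSingleton A M (g (p i)) ∘ₗ q i = g := by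
  ext x
  conv_rhs => rw [← hpq x, map_sum]
  simp

lemma nakayamaHom_bijective [Module.Finite A P] [Module.Projective A P] :
    Function.Bijective (nakayamaHom (R := R) (A := A) (P := P) (M := M)) := by
  obtain ⟨n, p, q, hpq⟩ := exists_dual_basis (A := A) P
  refine ⟨fun η η' h => LinearMap.ext fun g => ?_, fun f => ?_⟩
  · rw [← sum_toSpanSingleton_comp hpq g, map_sum, map_sum]
    simp only [← nakayamaHom_apply, h]
  · let η : (P →ₗ[A] M) →ₗ[R] R :=
      ∑ i, LinearMap.applyₗ (q i) ∘ₗ f.restrictScalars R ∘ₗ LinearMap.applyₗ' R (p i)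
    refine ⟨η, LinearMap.ext fun m => LinearMap.ext fun g => ?_⟩
    calc nakayamaHom η m g = ∑ i, f (g (p i) • m) (q i) := by simp [nakayamaHom_apply, η]
      _ = f m (∑ i, LinearMap.toSpanSingleton A A (g (p i)) ∘ₗ q i) := by
        simp only [map_sum, map_smul, dualModule'_smul_apply]
        rfl
      _ = f m g := by rw [sum_toSpanSingleton_comp hpq g]

end Nakayama

section SplitQuasiHereditary

variable {R : Type} [CommRing R] {A : Type} [Ring A] [Algebra R A]
  {Λ : Type} [PartialOrder Λ]
  {Δ : Λ → Type} [∀ l, AddCommGroup (Δ l)] [∀ l, Module R (Δ l)]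
  [∀ l, Module A (Δ l)] [∀ l, IsScalarTower R A (Δ l)]
  {M N N' : Type} [AddCommGroup M] [Module A M]
  [AddCommGroup N] [Module A N] [AddCommGroup N'] [Module A N']

namespace SplitQH

variable (h : SplitQH R A Λ Δ)
include h

lemma hom_eq_zero_of_not_le {l m : Λ} (hlm : ¬ l ≤ m) (u : Δ l →ₗ[A] Δ m) : u = 0 :=
  not_not.1 fun hu => hlm (h.hom_le l m ⟨u, hu⟩)

lemma exists_smul_of_end (l : Λ) (u : Δ l →ₗ[A] Δ l) : ∃ r : R, u = r • LinearMap.id := by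
  obtain ⟨e⟩ := h.endIso l
  exact ⟨e u, e.injective <| calc e u = e u • e 1 := by rw [map_one, smul_eq_mul, mul_one]
    _ = e (e u • 1) := (map_smul e _ _).symm⟩

lemma inFilt_P (l : Λ) : InFilt R A Λ Δ {m | l ≤ m} (h.P l) := by
  have := h.deltaFinA l
  exact InFilt.extension (IsSES.ker_subtype (h.epi_surj l))
    ((h.ker_filt l).mono fun m hm => le_of_lt hm) (InFilt.of_mem (le_refl l))

lemma hom_P_eq_zero (l : Λ) (hN : ∀ m, l ≤ m → ∀ u : Δ m →ₗ[A] N, u = 0)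
    (u : h.P l →ₗ[A] N) : u = 0 :=
  (h.inFilt_P l).hom_eq_zero hN u

lemma exists_inFilt_isDirectSummand [Finite Λ] :
    ∃ Y : ModuleCat.{0} A, InFilt R A Λ Δ Set.univ Y ∧ IsDirectSummand A A Y := by
  obtain ⟨n, hn⟩ := h.add_gen (ModuleCat.of A A) (inferInstanceAs (Module.Finite A A))
    (inferInstanceAs (Module.Projective A A))
  have hclosed := InFilt.isExtensionClosed R A Λ Δ Set.univ
  exact ⟨ModuleCat.of A (Fin n → ∀ l, h.P l),
    hclosed.pi _ fun _ => hclosed.pi _ fun l => (h.inFilt_P l).mono (Set.subset_univ _), hn⟩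

lemma subsingleton_of_hom_eq_zero [Finite Λ] (hN : ∀ l, ∀ u : Δ l →ₗ[A] N, u = 0) :
    Subsingleton N := by
  obtain ⟨Y, hY, i, p, hpi⟩ := h.exists_inFilt_isDirectSummand
  refine subsingleton_of_forall_eq 0 fun x => ?_
  have hx : LinearMap.toSpanSingleton A N x ∘ₗ p = 0 := hY.hom_eq_zero (fun l _ => hN l) _
  have hpi_one : p (i 1) = 1 := congr($hpi 1)
  simpa [hpi_one] using congr($hx (i 1))

lemma surjective_of_lift [Finite Λ] {p : N →ₗ[A] N'} (hN : ∀ l, ExtZero A (Δ l) N 1)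
    (hp : ∀ l, ∀ u : Δ l →ₗ[A] N', ∃ v : Δ l →ₗ[A] N, p ∘ₗ v = u) : Function.Surjective p := by
  obtain ⟨Y, hY, i, q, hqi⟩ := h.exists_inFilt_isDirectSummand
  intro x
  obtain ⟨v, hv⟩ := hY.exists_lift (fun l _ => hN l) (fun l _ => hp l)
    (LinearMap.toSpanSingleton A N' x ∘ₗ q)
  have hqi_one : q (i 1) = 1 := congr($hqi 1)
  exact ⟨v (i 1), by simpa [hqi_one] using congr($hv (i 1))⟩

lemma injective_of_comp_eq_zero [Finite Λ] {p : N →ₗ[A] N'}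
    (hp : ∀ l, ∀ u : Δ l →ₗ[A] N, p ∘ₗ u = 0 → u = 0) : Function.Injective p := by
  rw [← LinearMap.ker_eq_bot, ← Submodule.subsingleton_iff_eq_bot]
  refine h.subsingleton_of_hom_eq_zero fun l u => ?_
  have hu := hp l ((LinearMap.ker p).subtype ∘ₗ u) (by
    rw [← LinearMap.comp_assoc, LinearMap.comp_ker_subtype, LinearMap.zero_comp])
  exact (LinearMap.cancel_left Subtype.val_injective).1 (hu.trans (LinearMap.comp_zero _).symm)

lemma hom_quotient_eq_zero {p : N →ₗ[A] N'} (hp : Function.Surjective p) {l : Λ}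
    (hN : ∀ m, l ≤ m → ∀ u : Δ m →ₗ[A] N, u = 0) (u : Δ l →ₗ[A] N') : u = 0 := by
  have := h.P_proj l
  obtain ⟨v, hv⟩ := Module.projective_lifting_property p (u ∘ₗ h.epi l) hp
  rw [h.hom_P_eq_zero l hN v, LinearMap.comp_zero] at hv
  exact (LinearMap.cancel_right (h.epi_surj l)).1 (hv.symm.trans (LinearMap.zero_comp _).symm)

lemma eq_zero_of_hom_eq_zero [Finite Λ] {U : Set Λ} (hU : IsUpperSet U)
    (hN : ∀ l ∈ U, ∀ u : Δ l →ₗ[A] N, u = 0) (hN' : ∀ l ∉ U, ∀ u : Δ l →ₗ[A] N', u = 0)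
    (u : N →ₗ[A] N') : u = 0 := by
  have hrange : Subsingleton (LinearMap.range u) := by
    refine h.subsingleton_of_hom_eq_zero fun l v => ?_
    by_cases hl : l ∈ U
    · exact h.hom_quotient_eq_zero u.surjective_rangeRestrict (fun m hm => hN m (hU hm hl)) v
    · exact (LinearMap.cancel_left Subtype.val_injective).1
        ((hN' l hl ((LinearMap.range u).subtype ∘ₗ v)).trans (LinearMap.comp_zero _).symm)
  rwa [Submodule.subsingleton_iff_eq_bot, LinearMap.range_eq_bot] at hrange

section Hom

variable [Module R N] [IsScalarTower R A N]

/-- A homomorphism from `P(l)` to a module without homomorphisms from the standard modules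
larger than `Δ(l)` factors uniquely through `Δ(l)`. -/
def homEquiv (l : Λ) (hN : ∀ m, l < m → ∀ u : Δ m →ₗ[A] N, u = 0) :
    (Δ l →ₗ[A] N) ≃ₗ[R] (h.P l →ₗ[A] N) :=
  LinearEquiv.ofBijective (LinearMap.lcomp R N (h.epi l))
    ⟨fun _ _ huv => (LinearMap.cancel_right (h.epi_surj l)).1 huv, fun u =>
      (IsSES.ker_subtype (h.epi_surj l)).exists_factor_right u ((h.ker_filt l).hom_eq_zero hN _)⟩

@[simp] lemma homEquiv_apply (l : Λ) (hN : ∀ m, l < m → ∀ u : Δ m →ₗ[A] N, u = 0)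
    (u : Δ l →ₗ[A] N) : h.homEquiv l hN u = u ∘ₗ h.epi l := rfl

lemma finProj_hom [Module.Finite R N] [Module.Projective R N] (l : Λ)
    (hN : ∀ m, l < m → ∀ u : Δ m →ₗ[A] N, u = 0) :
    Module.Finite R (Δ l →ₗ[A] N) ∧ Module.Projective R (Δ l →ₗ[A] N) := by
  have := h.P_fin l
  have := h.P_proj l
  obtain ⟨_, _⟩ := finProj_hom_of_projective R A (h.P l) N
  exact ⟨.equiv (h.homEquiv l hN).symm, .of_equiv (h.homEquiv l hN).symm⟩

end Hom

end SplitQH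

end SplitQuasiHereditary

section TensorHom

variable {R : Type} [CommRing R] {A : Type} [Ring A] [Algebra R A]
  {X Y M U : Type} [AddCommGroup X] [Module A X]
  [AddCommGroup Y] [Module R Y] [Module A Y] [IsScalarTower R A Y]
  [AddCommGroup M] [Module R M] [Module A M] [IsScalarTower R A M]
  [AddCommGroup U] [Module R U]

lemma tensorIn_comp_bijective [Module.Finite R U] [Module.Projective R U]
    (e : (X →ₗ[A] Y) ≃ₗ[R] R) :
    Function.Bijective fun u : U => tensorIn R A Y u ∘ₗ e.symm 1 := by
  have hout (q : U →ₗ[R] R) (u : U) :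
      tensorOut A Y q ∘ₗ tensorIn R A Y u ∘ₗ e.symm 1 = e.symm (q u) := by
    rw [← LinearMap.comp_assoc, tensorOut_comp_tensorIn, LinearMap.smul_comp, LinearMap.id_comp,
      ← map_smul, smul_eq_mul, mul_one]
  have hsymm (z : X →ₗ[A] Y) : e z • e.symm 1 = z := by
    rw [← map_smul, smul_eq_mul, mul_one, e.symm_apply_apply]
  obtain ⟨n, u, q, huq⟩ := exists_dual_basis (A := R) U
  refine ⟨fun v v' hv => ?_, fun w => ⟨∑ i, e (tensorOut A Y (q i) ∘ₗ w) • u i, ?_⟩⟩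
  · have hq (i : Fin n) : q i v = q i v' := e.symm.injective <| by
      rw [← hout, ← hout]
      exact congr(tensorOut A Y (q i) ∘ₗ $hv)
    rw [← huq v, ← huq v']
    simp only [hq]
  · ext x
    calc tensorIn R A Y (∑ i, e (tensorOut A Y (q i) ∘ₗ w) • u i) (e.symm 1 x)
        = ∑ i, tensorIn R A Y (u i) ((e (tensorOut A Y (q i) ∘ₗ w) • e.symm 1) x) := by
          simp [TensorProduct.smul_tmul']
      _ = ∑ i, tensorIn R A Y (u i) (tensorOut A Y (q i) (w x)) := by
          simp only [hsymm, LinearMap.comp_apply]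
      _ = w x := sum_tensorIn_tensorOut huq (w x)

lemma tensor_hom_eq_zero [Module.Finite R U] [Module.Projective R U]
    (hXY : ∀ u : X →ₗ[A] Y, u = 0) (w : X →ₗ[A] Y ⊗[R] U) : w = 0 := by
  obtain ⟨n, u, q, huq⟩ := exists_dual_basis (A := R) U
  ext x
  have hq (i : Fin n) : tensorOut A Y (q i) (w x) = 0 :=
    LinearMap.congr_fun (hXY (tensorOut A Y (q i) ∘ₗ w)) x
  rw [← sum_tensorIn_tensorOut (A := A) (X := Y) huq (w x)]
  simp only [hq, map_zero, Finset.sum_const_zero, LinearMap.zero_apply]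

variable [Module R X] [IsScalarTower R A X]

variable (R A X M) in
/-- The evaluation map `x ⊗ g ↦ g(x)`. -/
def evalTensor : X ⊗[R] (X →ₗ[A] M) →ₗ[A] M :=
  TensorProduct.AlgebraTensorModule.lift
    { toFun := fun x => LinearMap.applyₗ' R x
      map_add' := fun x y => by ext; simp
      map_smul' := fun a x => by ext; simp }

lemma evalTensor_tmul (x : X) (g : X →ₗ[A] M) : evalTensor R A X M (x ⊗ₜ[R] g) = g x := rfl

end TensorHom

/-- The family `N` is dual to the family `Δ` with respect to `Hom` and `Ext¹`, as costandard modules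
are to standard modules. -/
structure IsExtDualFamily (R : Type) [CommRing R] (A : Type) [Ring A] [Algebra R A] (Λ : Type)
    (Δ : Λ → Type) [∀ l, AddCommGroup (Δ l)] [∀ l, Module A (Δ l)]
    (N : Λ → Type) [∀ l, AddCommGroup (N l)] [∀ l, Module R (N l)]
    [∀ l, Module A (N l)] [∀ l, IsScalarTower R A (N l)] : Prop where
  homEquiv : ∀ l, Nonempty ((Δ l →ₗ[A] N l) ≃ₗ[R] R)
  hom_eq_zero : ∀ l m, l ≠ m → ∀ u : Δ l →ₗ[A] N m, u = 0
  extZero_one : ∀ l m, ExtZero A (Δ l) (N m) 1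

section ExtDualFamily

variable {R : Type} [CommRing R] {A : Type} [Ring A] [Algebra R A] {Λ : Type}
  {Δ : Λ → Type} [∀ l, AddCommGroup (Δ l)] [∀ l, Module A (Δ l)]
  {Nb : Λ → Type} [∀ l, AddCommGroup (Nb l)] [∀ l, Module R (Nb l)]
  [∀ l, Module A (Nb l)] [∀ l, IsScalarTower R A (Nb l)]
  {M : Type} [AddCommGroup M] [Module A M]

lemma IsExtDualFamily.finProj_hom (hc : IsExtDualFamily R A Λ Δ Nb) (l m : Λ) :
    Module.Finite R (Δ l →ₗ[A] Nb m) ∧ Module.Projective R (Δ l →ₗ[A] Nb m) := by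
  by_cases hlm : l = m
  · subst hlm
    obtain ⟨e⟩ := hc.homEquiv l
    exact ⟨.equiv e.symm, .of_equiv e.symm⟩
  · have : Subsingleton (Δ l →ₗ[A] Nb m) := subsingleton_of_forall_eq 0 (hc.hom_eq_zero l m hlm)
    exact ⟨inferInstance, inferInstance⟩

variable [PartialOrder Λ] [∀ l, Module R (Δ l)] [∀ l, IsScalarTower R A (Δ l)]

lemma IsCostandard.isExtDualFamily (hc : IsCostandard R A Λ Δ Nb) :
    IsExtDualFamily R A Λ Δ Nb where
  homEquiv := hc.2.1
  hom_eq_zero := hc.2.2.1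
  extZero_one l m := (extVanish_succ_iff_extZero 0).1 (hc.2.2.2 l m 1 one_pos)

lemma SplitQH.extZero_of_extZero_one (h : SplitQH R A Λ Δ)
    (hM : ∀ l, ExtZero A (Δ l) M 1) (l : Λ) (n : ℕ) : ExtZero A (Δ l) M (n + 1) := by
  induction n generalizing l with
  | zero => exact hM l
  | succ n ih =>
    have := h.P_proj l
    exact (IsSES.ker_subtype (h.epi_surj l)).extZero_contravariant₃
      ((h.ker_filt l).extZero_left fun m _ => ih m) (ExtZero.of_projective (n + 1))

namespace IsExtDualFamily

variable (hc : IsExtDualFamily R A Λ Δ Nb) (h : SplitQH R A Λ Δ)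
include hc h

lemma finProj [Finite Λ] (l : Λ) : FinProj R A (Nb l) := by
  obtain ⟨Y, hY, hA⟩ := h.exists_inFilt_isDirectSummand
  obtain ⟨_, _⟩ := hY.finProj_hom (fun m _ => hc.extZero_one m l) fun m _ => hc.finProj_hom m l
  have hAN : IsDirectSummand R (Nb l) (Y →ₗ[A] Nb l) :=
    IsDirectSummand.trans (.of_equiv (LinearMap.ringLmapEquivSelf A R (Nb l)).symm) hA.hom
  exact finProj_iff.2 ⟨hAN.finite, hAN.projective⟩

lemma finite [Finite Λ] (l : Λ) : Module.Finite A (Nb l) := by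
  obtain ⟨_, _⟩ := finProj_iff.1 (hc.finProj h l)
  exact .of_restrictScalars_finite R A _

variable {l : Λ} (e : (Δ l →ₗ[A] Nb l) ≃ₗ[R] R)

/-- The linear form on `Hom_A(P(l), ∇(l))` which extends `e : Hom_A(Δ(l), ∇(l)) ≃ R`. -/
def form : (h.P l →ₗ[A] Nb l) →ₗ[R] R :=
  e.toLinearMap ∘ₗ (h.homEquiv l fun m hm => hc.hom_eq_zero m l hm.ne').symm.toLinearMap

lemma form_comp_epi (w : Δ l →ₗ[A] Nb l) : hc.form h e (w ∘ₗ h.epi l) = e w :=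
  congrArg e (LinearEquiv.symm_apply_apply _ w)

/-- The embedding of `∇(l)` into the Nakayama module of `P(l)`. It induces bijections on
`Hom_A(Δ(m), -)` for all `m` that are not larger than `l`. -/
def embedding : Nb l →ₗ[A] Nakayama R A (h.P l) := nakayamaHom (hc.form h e)

lemma embedding_comp [Module R M] [IsScalarTower R A M] (k : M →ₗ[A] Nb l) :
    hc.embedding h e ∘ₗ k = nakayamaHom (hc.form h e ∘ₗ LinearMap.compRight R k) :=
  nakayamaHom_comp _ k

lemma embedding_injective [Finite Λ] : Function.Injective (hc.embedding h e) := by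
  have := h.P_fin l
  have := h.P_proj l
  refine h.injective_of_comp_eq_zero fun m u hu => ?_
  by_cases hm : m = l
  · subst hm
    rw [hc.embedding_comp] at hu
    have hform : hc.form h e ∘ₗ LinearMap.compRight R u = 0 :=
      nakayamaHom_bijective.1 (hu.trans (LinearMap.ext fun _ => rfl))
    have heu : e u = 0 := by
      simpa only [LinearMap.comp_apply, LinearMap.compRight_apply, form_comp_epi,
        LinearMap.zero_apply] using congr($hform (h.epi m))
    exact e.map_eq_zero_iff.1 heu
  · exact hc.hom_eq_zero m l hm u

lemma exists_embedding_comp_eq {m : Λ} (hm : ¬ l < m) (u : Δ m →ₗ[A] Nakayama R A (h.P l)) :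
    ∃ w : Δ m →ₗ[A] Nb l, hc.embedding h e ∘ₗ w = u := by
  have := h.P_fin l
  have := h.P_proj l
  obtain ⟨η, rfl⟩ := nakayamaHom_bijective.2 u
  by_cases hml : m = l
  · subst hml
    refine ⟨e.symm (η (h.epi m)), ?_⟩
    rw [hc.embedding_comp]
    congr 1
    ext g
    obtain ⟨v, rfl⟩ := (h.homEquiv (N := Δ m) m fun m' hm' =>
      h.hom_eq_zero_of_not_le hm'.not_ge).surjective g
    obtain ⟨r, rfl⟩ := h.exists_smul_of_end m v
    simp [form_comp_epi]
  · have hP : Subsingleton (h.P l →ₗ[A] Δ m) := subsingleton_of_forall_eq 0 <|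
      h.hom_P_eq_zero l fun m' hm' => h.hom_eq_zero_of_not_le fun hle =>
        hm (lt_of_le_of_ne (hm'.trans hle) (Ne.symm hml))
    exact ⟨0, LinearMap.ext fun x => LinearMap.ext fun g => by
      simp [nakayamaHom_apply, Subsingleton.elim (LinearMap.toSpanSingleton A (Δ m) x ∘ₗ g) 0]⟩

lemma hom_coker_embedding_eq_zero [Finite Λ] {m : Λ} (hm : ¬ l < m)
    (u : Δ m →ₗ[A] Nakayama R A (h.P l) ⧸ LinearMap.range (hc.embedding h e)) : u = 0 := by
  have s := IsSES.range_mkQ (hc.embedding_injective h e)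
  obtain ⟨t, rfl⟩ := s.exists_lift (hc.extZero_one m l) u
  obtain ⟨w, rfl⟩ := hc.exists_embedding_comp_eq h e hm t
  rw [← LinearMap.comp_assoc, s.exact.linearMap_comp_eq_zero, LinearMap.zero_comp]

lemma exists_hom [Finite Λ] [Module R M] [IsScalarTower R A M]
    (hM : ∀ m, l < m → ∀ u : Δ m →ₗ[A] M, u = 0) (ξ : (Δ l →ₗ[A] M) →ₗ[R] R) :
    ∃ k : M →ₗ[A] Nb l, ∀ g, e (k ∘ₗ g) = ξ g := by
  have := h.P_fin l
  have := h.P_proj l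
  have hcoker := h.eq_zero_of_hom_eq_zero (isUpperSet_Ioi l) hM
    (fun m hm => hc.hom_coker_embedding_eq_zero h e hm)
    ((LinearMap.range (hc.embedding h e)).mkQ ∘ₗ nakayamaHom (ξ ∘ₗ (h.homEquiv l hM).symm))
  obtain ⟨k, hk⟩ :=
    (IsSES.range_mkQ (hc.embedding_injective h e)).exists_factor_left _ hcoker
  rw [hc.embedding_comp] at hk
  refine ⟨k, fun g => ?_⟩
  calc e (k ∘ₗ g) = hc.form h e (k ∘ₗ g ∘ₗ h.epi l) := (hc.form_comp_epi h e _).symm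
    _ = ξ ((h.homEquiv l hM).symm (h.homEquiv l hM g)) :=
      congr($(nakayamaHom_bijective.1 hk) (g ∘ₗ h.epi l))
    _ = ξ g := by rw [LinearEquiv.symm_apply_apply]

lemma exists_hom_tensor [Finite Λ] [Module R M] [IsScalarTower R A M]
    [Module.Finite R (Δ l →ₗ[A] M)] [Module.Projective R (Δ l →ₗ[A] M)]
    (hM : ∀ m, l < m → ∀ u : Δ m →ₗ[A] M, u = 0) :
    ∃ p : M →ₗ[A] Nb l ⊗[R] (Δ l →ₗ[A] M), ∀ g : Δ l →ₗ[A] M,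
      p ∘ₗ g = tensorIn R A (Nb l) g ∘ₗ e.symm 1 := by
  obtain ⟨n, v, q, hvq⟩ := exists_dual_basis (A := R) (Δ l →ₗ[A] M)
  choose k hk using fun i => hc.exists_hom h e hM (q i)
  have hkg (i : Fin n) (g : Δ l →ₗ[A] M) : k i ∘ₗ g = q i g • e.symm 1 := e.injective <| by
    rw [hk, map_smul, LinearEquiv.apply_symm_apply, smul_eq_mul, mul_one]
  refine ⟨∑ i, tensorIn R A (Nb l) (v i) ∘ₗ k i, fun g => LinearMap.ext fun x => ?_⟩
  have hkgx (i : Fin n) : k i (g x) = q i g • e.symm 1 x := congr($(hkg i g) x)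
  conv_rhs => rw [← hvq g]
  simp [hkgx]

lemma exists_comp_evalTensor_eq [Finite Λ] [Module R M] [IsScalarTower R A M]
    (hM : ∀ m, l < m → ∀ u : Δ m →ₗ[A] M, u = 0) (m : Λ)
    (u : Δ l ⊗[R] (Δ l →ₗ[A] M) →ₗ[A] Nb m) :
    ∃ k : M →ₗ[A] Nb m, k ∘ₗ evalTensor R A (Δ l) M = u := by
  suffices ∃ k : M →ₗ[A] Nb m, ∀ g, k ∘ₗ g = u ∘ₗ tensorIn R A (Δ l) g by
    obtain ⟨k, hk⟩ := this
    exact ⟨k, TensorProduct.AlgebraTensorModule.ext fun x g => congr($(hk g) x)⟩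
  by_cases hm : l = m
  · subst hm
    obtain ⟨e⟩ := hc.homEquiv l
    obtain ⟨k, hk⟩ := hc.exists_hom h e hM
      (e.toLinearMap ∘ₗ LinearMap.compRight R u ∘ₗ tensorIn R A (Δ l))
    exact ⟨k, fun g => e.injective (hk g)⟩
  · exact ⟨0, fun g => (hc.hom_eq_zero l m hm _).symm⟩

end IsExtDualFamily

end ExtDualFamily

section CostandardFiltrations

lemma lowerSet_induction {Λ : Type} [Finite Λ] [PartialOrder Λ]
    {p : (B : Set Λ) → IsLowerSet B → Prop} {B : Set Λ} (hB : IsLowerSet B)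
    (empty : p ∅ isLowerSet_empty)
    (step : ∀ (B : Set Λ) (l : Λ) (hB : IsLowerSet B) (hl : Maximal (· ∈ B) l),
      p (B \ {l}) (hB.erase fun _ hm => hl.eq_of_ge hm) → p B hB) : p B hB := by
  induction B using WellFoundedLT.induction with
  | ind B ih =>
    obtain rfl | hne := B.eq_empty_or_nonempty
    · exact empty
    · obtain ⟨l, hl⟩ := B.toFinite.exists_maximal hne
      exact step B l hB hl (ih _ (Set.sdiff_singleton_ssubset.2 hl.prop) _)

variable {R : Type} [CommRing R] {A : Type} [Ring A] [Algebra R A]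
  {Λ : Type} [Finite Λ] [PartialOrder Λ]
  {Δ : Λ → Type} [∀ l, AddCommGroup (Δ l)] [∀ l, Module R (Δ l)]
  [∀ l, Module A (Δ l)] [∀ l, IsScalarTower R A (Δ l)]
  {Nb : Λ → Type} [∀ l, AddCommGroup (Nb l)] [∀ l, Module R (Nb l)]
  [∀ l, Module A (Nb l)] [∀ l, IsScalarTower R A (Nb l)]
  {N : Type} [AddCommGroup N] [Module A N]

namespace IsExtDualFamily

variable (hc : IsExtDualFamily R A Λ Δ Nb) (h : SplitQH R A Λ Δ)
include hc h

lemma exists_surjective_costandard [Module R N] [IsScalarTower R A N] {l : Λ}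
    [Module.Finite R (Δ l →ₗ[A] N)] [Module.Projective R (Δ l →ₗ[A] N)]
    (hN : ∀ m, l < m → ∀ u : Δ m →ₗ[A] N, u = 0) (hext : ∀ m, ExtZero A (Δ m) N 1) :
    ∃ p : N →ₗ[A] Nb l ⊗[R] (Δ l →ₗ[A] N), Function.Surjective p ∧
      (∀ m, ExtZero A (Δ m) (LinearMap.ker p) 1) ∧
      ∀ u : Δ l →ₗ[A] N, p ∘ₗ u = 0 → u = 0 := by
  obtain ⟨e⟩ := hc.homEquiv l
  obtain ⟨p, hp⟩ := hc.exists_hom_tensor h e hN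
  have hbij := tensorIn_comp_bijective (U := Δ l →ₗ[A] N) e
  have hlift (m : Λ) (w : Δ m →ₗ[A] Nb l ⊗[R] (Δ l →ₗ[A] N)) : ∃ v, p ∘ₗ v = w := by
    by_cases hm : m = l
    · subst hm
      obtain ⟨g, rfl⟩ := hbij.2 w
      exact ⟨g, hp g⟩
    · exact ⟨0, by rw [tensor_hom_eq_zero (hc.hom_eq_zero m l hm) w, LinearMap.comp_zero]⟩
  have hsurj := h.surjective_of_lift hext hlift
  refine ⟨p, hsurj, fun m => (IsSES.ker_subtype hsurj).extZero_one_of_lift (hlift m) (hext m),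
    fun u hu => hbij.1 ?_⟩
  simp only [← hp, hu, LinearMap.comp_zero]

lemma inFilt_costandard_of_support {B : Set Λ} (hB : IsLowerSet B) (hfin : FinProj R A N)
    (hext : ∀ l, ExtZero A (Δ l) N 1) (hN : ∀ m ∉ B, ∀ u : Δ m →ₗ[A] N, u = 0) :
    InFilt R A Λ Nb Set.univ N := by
  induction hB using lowerSet_induction generalizing N with
  | empty =>
    have := h.subsingleton_of_hom_eq_zero fun m => hN m (Set.notMem_empty m)
    exact (InFilt.isExtensionClosed R A Λ Nb Set.univ).of_subsingleton N
  | step B l _ hl ih =>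
    have hN_above (m : Λ) (hm : l < m) : ∀ u : Δ m →ₗ[A] N, u = 0 :=
      hN m (hl.not_prop_of_gt hm)
    obtain ⟨_, _, _, _⟩ := id hfin
    obtain ⟨_, _⟩ := h.finProj_hom l hN_above
    obtain ⟨p, hsurj, hker, hl_ker⟩ := hc.exists_surjective_costandard h hN_above hext
    have := hc.finite h l
    have htensor : InFilt R A Λ Nb Set.univ (Nb l ⊗[R] (Δ l →ₗ[A] N)) :=
      InFilt.tensor (Set.mem_univ l) _
    have s := IsSES.ker_subtype hsurj
    have hker_fin : FinProj R A (LinearMap.ker p) :=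
      s.finProj_left hfin (htensor.finProj fun m _ => hc.finProj h m)
    refine InFilt.extension s (ih hker_fin hker fun m hm u => ?_) htensor
    have hu : (LinearMap.ker p).subtype ∘ₗ u = 0 := by
      by_cases hml : m = l
      · subst hml
        refine hl_ker _ ?_
        rw [← LinearMap.comp_assoc, LinearMap.comp_ker_subtype, LinearMap.zero_comp]
      · exact hN m (fun hmB => hm ⟨hmB, hml⟩) _
    exact (LinearMap.cancel_left s.inj).1 (hu.trans (LinearMap.comp_zero _).symm)

theorem inFilt_costandard_of_extZero_one (hfin : FinProj R A N)
    (hext : ∀ l, ExtZero A (Δ l) N 1) : InFilt R A Λ Nb Set.univ N :=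
  hc.inFilt_costandard_of_support h isLowerSet_univ hfin hext fun _ hm => (hm trivial).elim

end IsExtDualFamily

end CostandardFiltrations

section LinearForms

variable {R : Type} [CommRing R] {A : Type} [Ring A] [Algebra R A] {X Y M : Type}
  [AddCommGroup X] [Module R X] [AddCommGroup Y] [Module R Y]
  [AddCommGroup M] [Module R M] [Module A M] [IsScalarTower R A M]

variable (R A) in
/-- The left `A`-module `Hom_R(A, R)`, which represents the functor `M ↦ Hom_R(M, R)`. -/
abbrev RegularDual : Type := A →ₗ[R] R

variable (A) in
/-- The homomorphism `m ↦ (a ↦ w (a • m))` corresponding to a linear form `w` on `M`. -/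
def dualHom (w : M →ₗ[R] R) : M →ₗ[A] RegularDual R A where
  toFun m := w ∘ₗ (LinearMap.toSpanSingleton A M m).restrictScalars R
  map_add' m m' := by
    ext a
    simp
  map_smul' a m := by
    ext b
    simp [mul_smul]

lemma dualHom_apply (w : M →ₗ[R] R) (m : M) (a : A) : dualHom A w m a = w (a • m) := rfl

lemma dualHom_surjective : Function.Surjective (dualHom A : (M →ₗ[R] R) → _) := by
  refine fun u => ⟨LinearMap.applyₗ (1 : A) ∘ₗ u.restrictScalars R, ?_⟩
  ext m a
  simp [dualHom_apply]

lemma IsSES.exists_extend_regularDual {M' M'' : Type} [AddCommGroup M'] [Module R M'] [Module A M']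
    [IsScalarTower R A M'] [AddCommGroup M''] [Module R M''] [Module A M''] [IsScalarTower R A M'']
    [Module.Projective R M''] {f : M' →ₗ[A] M} {g : M →ₗ[A] M''} (s : IsSES f g)
    (u : M' →ₗ[A] RegularDual R A) : ∃ v : M →ₗ[A] RegularDual R A, v ∘ₗ f = u := by
  obtain ⟨r, hr⟩ := (s.restrictScalars (R := R)).exists_retraction
  obtain ⟨w, rfl⟩ := dualHom_surjective u
  refine ⟨dualHom A (w ∘ₗ r), ?_⟩
  ext x a
  have hrx : r (a • f x) = a • x := by simpa using congr($hr (a • x))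
  simp [dualHom_apply, hrx]

lemma extZero_one_regularDual [Module.Projective R M] : ExtZero A M (RegularDual R A) 1 :=
  have s := IsSES.ker_subtype (Finsupp.linearCombination_id_surjective A M)
  s.extZero_one_of_extend s.exists_extend_regularDual (ExtZero.of_projective 0)

lemma exists_retraction_of_forall_dual [Module.Finite R X] [Module.Projective R X]
    {j : X →ₗ[R] Y} (hj : ∀ w : X →ₗ[R] R, ∃ v : Y →ₗ[R] R, v ∘ₗ j = w) :
    ∃ r : Y →ₗ[R] X, r ∘ₗ j = LinearMap.id := by
  obtain ⟨n, x, q, hxq⟩ := exists_dual_basis (A := R) X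
  choose v hv using fun i => hj (q i)
  have hvj (i : Fin n) (y : X) : v i (j y) = q i y := congr($(hv i) y)
  refine ⟨∑ i, LinearMap.toSpanSingleton R X (x i) ∘ₗ v i, LinearMap.ext fun y => ?_⟩
  simp [hvj, hxq]

end LinearForms

section StandardFiltrations

variable {R : Type} [CommRing R] {A : Type} [Ring A] [Algebra R A]
  {Λ : Type} [Finite Λ] [PartialOrder Λ]
  {Δ : Λ → Type} [∀ l, AddCommGroup (Δ l)] [∀ l, Module R (Δ l)]
  [∀ l, Module A (Δ l)] [∀ l, IsScalarTower R A (Δ l)]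
  {Nb : Λ → Type} [∀ l, AddCommGroup (Nb l)] [∀ l, Module R (Nb l)]
  [∀ l, Module A (Nb l)] [∀ l, IsScalarTower R A (Nb l)]
  {M : Type} [AddCommGroup M] [Module A M]

omit [Finite Λ] in
lemma SplitQH.finProj (h : SplitQH R A Λ Δ) (l : Λ) : FinProj R A (Δ l) :=
  finProj_iff.2 ⟨h.deltaFinR l, h.deltaProjR l⟩

omit [Finite Λ] in
lemma SplitQH.hom_coker_evalTensor_eq_zero (h : SplitQH R A Λ Δ) [Module R M]
    [IsScalarTower R A M] {l : Λ} (hM : ∀ m, l < m → ∀ u : Δ m →ₗ[A] M, u = 0)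
    (u : Δ l →ₗ[A] M ⧸ LinearMap.range (evalTensor R A (Δ l) M)) : u = 0 := by
  have := h.P_proj l
  obtain ⟨t, ht⟩ := Module.projective_lifting_property
    (LinearMap.range (evalTensor R A (Δ l) M)).mkQ (u ∘ₗ h.epi l) (Submodule.mkQ_surjective _)
  obtain ⟨g, rfl⟩ := (h.homEquiv l hM).surjective t
  refine (LinearMap.cancel_right (h.epi_surj l)).1 (ht.symm.trans (LinearMap.ext fun x => ?_))
  exact (Submodule.Quotient.mk_eq_zero _).2 ⟨h.epi l x ⊗ₜ g, evalTensor_tmul _ _⟩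

namespace IsExtDualFamily

variable (hc : IsExtDualFamily R A Λ Δ Nb) (h : SplitQH R A Λ Δ)
include hc h

lemma inFilt_costandard_regularDual : InFilt R A Λ Nb Set.univ (RegularDual R A) := by
  have := h.algFin
  have := h.algProj
  refine hc.inFilt_costandard_of_extZero_one h (finProj_iff.2 ⟨inferInstance, inferInstance⟩)
    fun l => ?_
  have := h.deltaProjR l
  exact extZero_one_regularDual

lemma exists_retraction_evalTensor [Module R M] [IsScalarTower R A M] {l : Λ}
    [Module.Finite R (Δ l →ₗ[A] M)] [Module.Projective R (Δ l →ₗ[A] M)]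
    (hM : ∀ m, l < m → ∀ u : Δ m →ₗ[A] M, u = 0) (hext : ∀ m, ExtZero A M (Nb m) 1) :
    ∃ r : M →ₗ[R] Δ l ⊗[R] (Δ l →ₗ[A] M),
      r ∘ₗ (evalTensor R A (Δ l) M).restrictScalars R = LinearMap.id := by
  have := h.deltaFinR l
  have := h.deltaProjR l
  refine exists_retraction_of_forall_dual fun w => ?_
  obtain ⟨v, hv⟩ := (hc.inFilt_costandard_regularDual h).exists_extend (fun m _ => hext m)
    (fun m _ => hc.exists_comp_evalTensor_eq h hM m) (dualHom A w)
  obtain ⟨w', rfl⟩ := dualHom_surjective v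
  refine ⟨w', LinearMap.ext fun x => ?_⟩
  simpa [dualHom_apply] using congr($hv x (1 : A))

lemma inFilt_standard_of_support {B : Set Λ} (hB : IsLowerSet B) (hfin : FinProj R A M)
    (hext : ∀ l, ExtZero A M (Nb l) 1) (hM : ∀ m ∉ B, ∀ u : Δ m →ₗ[A] M, u = 0) :
    InFilt R A Λ Δ Set.univ M := by
  induction hB using lowerSet_induction generalizing M with
  | empty =>
    have := h.subsingleton_of_hom_eq_zero fun m => hM m (Set.notMem_empty m)
    exact (InFilt.isExtensionClosed R A Λ Δ Set.univ).of_subsingleton M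
  | step B l hB hl ih =>
    have hM_above (m : Λ) (hm : l < m) : ∀ u : Δ m →ₗ[A] M, u = 0 :=
      hM m (hl.not_prop_of_gt hm)
    obtain ⟨_, _, _, _⟩ := id hfin
    obtain ⟨_, _⟩ := h.finProj_hom l hM_above
    have := h.deltaFinA l
    have htensor : InFilt R A Λ Δ Set.univ (Δ l ⊗[R] (Δ l →ₗ[A] M)) :=
      InFilt.tensor (Set.mem_univ l) _
    have hretr := hc.exists_retraction_evalTensor h hM_above hext
    have s := IsSES.range_mkQ (f := evalTensor R A (Δ l) M) (Function.LeftInverse.injective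
      fun x => congr($hretr.choose_spec x))
    have hcoker_fin : FinProj R A (M ⧸ LinearMap.range (evalTensor R A (Δ l) M)) :=
      s.finProj_right_of_retraction hfin hretr
    refine InFilt.extension s htensor (ih hcoker_fin (fun m => ?_) fun m hm => ?_)
    · exact s.extZero_one_of_extend (hc.exists_comp_evalTensor_eq h hM_above m) (hext m)
    · by_cases hml : m = l
      · subst hml
        exact h.hom_coker_evalTensor_eq_zero hM_above
      · exact h.hom_quotient_eq_zero s.surj fun m' hm' =>
          hM m' fun hm'B => hm ⟨hB hm' hm'B, hml⟩

theorem inFilt_standard_of_extZero_one (hfin : FinProj R A M)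
    (hext : ∀ l, ExtZero A M (Nb l) 1) : InFilt R A Λ Δ Set.univ M :=
  hc.inFilt_standard_of_support h isLowerSet_univ hfin hext fun _ hm => (hm trivial).elim

end IsExtDualFamily

end StandardFiltrations

section FactorizationThroughAdd

variable {A : Type} [Ring A] {M' M M'' P X : Type} [AddCommGroup M'] [Module A M']
  [AddCommGroup M] [Module A M] [AddCommGroup M''] [Module A M''] [AddCommGroup P] [Module A P]
  [AddCommGroup X] [Module A X]

variable (P) in
/-- The homomorphism `u` factors through a finite direct sum of copies of `P`, written as a sum of
homomorphisms that factor through `P`. -/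
def FactorsThroughAdd (u : M →ₗ[A] X) : Prop :=
  ∃ (n : ℕ) (a : Fin n → M →ₗ[A] P) (b : Fin n → P →ₗ[A] X), ∑ k, b k ∘ₗ a k = u

namespace FactorsThroughAdd

lemma of_subsingleton [Subsingleton M] (u : M →ₗ[A] X) : FactorsThroughAdd P u :=
  ⟨0, ![], ![], Subsingleton.elim _ u⟩

lemma of_comp (a : M →ₗ[A] P) (b : P →ₗ[A] X) : FactorsThroughAdd P (b ∘ₗ a) :=
  ⟨1, fun _ => a, fun _ => b, Fin.sum_univ_one _⟩

lemma add {u v : M →ₗ[A] X} (hu : FactorsThroughAdd P u) (hv : FactorsThroughAdd P v) :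
    FactorsThroughAdd P (u + v) := by
  obtain ⟨n, a, b, rfl⟩ := hu
  obtain ⟨m, c, d, rfl⟩ := hv
  exact ⟨n + m, Fin.append a c, Fin.append b d, by simp [Fin.sum_univ_add]⟩

lemma comp {u : M →ₗ[A] X} (hu : FactorsThroughAdd P u) (v : M' →ₗ[A] M) :
    FactorsThroughAdd P (u ∘ₗ v) := by
  obtain ⟨n, a, b, rfl⟩ := hu
  exact ⟨n, fun k => a k ∘ₗ v, b, by ext; simp⟩

lemma inAdd (hX : FactorsThroughAdd P (LinearMap.id : X →ₗ[A] X)) : InAdd A P X := by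
  obtain ⟨n, a, b, hab⟩ := hX
  refine ⟨n, LinearMap.pi a, ∑ k, b k ∘ₗ LinearMap.proj k, ?_⟩
  ext x
  simpa using congr($hab x)

lemma of_isSES {f : M' →ₗ[A] M} {g : M →ₗ[A] M''} (s : IsSES f g) (hP : ExtZero A M'' P 1)
    (h' : ∀ u : M' →ₗ[A] X, FactorsThroughAdd P u) (h'' : ∀ u : M'' →ₗ[A] X, FactorsThroughAdd P u)
    (u : M →ₗ[A] X) : FactorsThroughAdd P u := by
  obtain ⟨n, a, b, hab⟩ := h' (u ∘ₗ f)
  choose c hc using fun k => s.exists_extend hP (a k)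
  have hcf : (∑ k, b k ∘ₗ c k) ∘ₗ f = u ∘ₗ f := by
    ext x
    simp [← hab, ← hc]
  obtain ⟨v, hv⟩ := s.exists_factor_right (u - ∑ k, b k ∘ₗ c k) (by
    rw [LinearMap.sub_comp, hcf, sub_self])
  rw [← sub_add_cancel u (∑ k, b k ∘ₗ c k), ← hv]
  exact ((h'' v).comp g).add ⟨n, c, b, rfl⟩

end FactorsThroughAdd

end FactorizationThroughAdd

section Tilting

variable {R : Type} [CommRing R] {A : Type} [Ring A] [Algebra R A]
  {Λ : Type} [PartialOrder Λ]
  {Δ : Λ → Type} [∀ l, AddCommGroup (Δ l)] [∀ l, Module R (Δ l)]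
  [∀ l, Module A (Δ l)] [∀ l, IsScalarTower R A (Δ l)]
  {Nb : Λ → Type} [∀ l, AddCommGroup (Nb l)] [∀ l, Module R (Nb l)]
  [∀ l, Module A (Nb l)] [∀ l, IsScalarTower R A (Nb l)]
  {T : Λ → Type} [∀ l, AddCommGroup (T l)] [∀ l, Module A (T l)]
  {M N X : Type} [AddCommGroup M] [Module A M] [AddCommGroup N] [Module A N]
  [AddCommGroup X] [Module A X]

lemma IsExtDualFamily.extZero_of_inFilt (hc : IsExtDualFamily R A Λ Δ Nb) (h : SplitQH R A Λ Δ)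
    {S S' : Set Λ} (hM : InFilt R A Λ Δ S M) (hN : InFilt R A Λ Nb S' N) (n : ℕ) :
    ExtZero A M N (n + 1) :=
  hM.extZero_left fun l _ => h.extZero_of_extZero_one
    (fun m => hN.extZero_right fun m' _ => hc.extZero_one m m') l n

namespace IsCharTilting

variable (hT : IsCharTilting R A Λ Δ Nb T)

include hT

lemma inFilt_standard [Finite Λ] (h : SplitQH R A Λ Δ) : InFilt R A Λ Δ Set.univ (∀ l, T l) := by
  refine (InFilt.isExtensionClosed R A Λ Δ Set.univ).pi T fun l => ?_
  obtain ⟨⟨f, hf, hX⟩, -⟩ := hT l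
  have := h.deltaFinA l
  exact InFilt.extension (IsSES.range_mkQ hf) (InFilt.of_mem (Set.mem_univ l))
    (hX.mono (Set.subset_univ _))

lemma inFilt_costandard [Finite Λ] (hNb : ∀ l, Module.Finite A (Nb l)) :
    InFilt R A Λ Nb Set.univ (∀ l, T l) := by
  refine (InFilt.isExtensionClosed R A Λ Nb Set.univ).pi T fun l => ?_
  obtain ⟨-, g, hg, hY⟩ := hT l
  exact InFilt.extension (IsSES.ker_subtype hg) (hY.mono (Set.subset_univ _))
    (InFilt.of_mem (Set.mem_univ l))

lemma extZero_standard [WellFoundedLT Λ] (hN : ∀ n, ExtZero A (∀ l, T l) N (n + 1)) (l : Λ)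
    (n : ℕ) : ExtZero A (Δ l) N (n + 1) := by
  induction l using WellFoundedLT.induction generalizing n with
  | ind l ih =>
    obtain ⟨⟨f, hf, hX⟩, -⟩ := hT l
    exact (IsSES.range_mkQ hf).extZero_contravariant₁
      ((hN n).of_isDirectSummand_left (isDirectSummand_pi T l))
      (hX.extZero_left fun m hm => ih m hm (n + 1))

lemma extZero_costandard [WellFoundedLT Λ] (hM : ∀ n, ExtZero A M (∀ l, T l) (n + 1)) (l : Λ)
    (n : ℕ) : ExtZero A M (Nb l) (n + 1) := by
  induction l using WellFoundedLT.induction generalizing n with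
  | ind l ih =>
    obtain ⟨-, g, hg, hY⟩ := hT l
    exact (IsSES.ker_subtype hg).extZero_covariant₃
      ((hM n).of_isDirectSummand_right (isDirectSummand_pi T l))
      (hY.extZero_right fun m hm => ih m hm (n + 1))

lemma factorsThroughAdd_standard (hN : ∀ l, ExtZero A (Δ l) N 1) {l : Λ} (u : Δ l →ₗ[A] N) :
    FactorsThroughAdd (∀ l, T l) u := by
  obtain ⟨⟨f, hf, hX⟩, -⟩ := hT l
  obtain ⟨v, rfl⟩ := (IsSES.range_mkQ hf).exists_extend (hX.extZero_left fun m _ => hN m) u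
  obtain ⟨i, p, hpi⟩ := isDirectSummand_pi (A := A) T l
  have hv : (v ∘ₗ p) ∘ₗ (i ∘ₗ f) = v ∘ₗ f := LinearMap.ext fun x => congr(v ($hpi (f x)))
  exact hv ▸ FactorsThroughAdd.of_comp (i ∘ₗ f) (v ∘ₗ p)

lemma factorsThroughAdd (hΔT : ∀ l, ExtZero A (Δ l) (∀ l, T l) 1)
    (hN : ∀ l, ExtZero A (Δ l) N 1) (hM : InFilt R A Λ Δ Set.univ M) (u : M →ₗ[A] N) :
    FactorsThroughAdd (∀ l, T l) u := by
  suffices hMN : ExtZero A M (∀ l, T l) 1 ∧ ∀ u : M →ₗ[A] N, FactorsThroughAdd (∀ l, T l) u from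
    hMN.2 u
  refine hM.induction_on (C := fun M _ _ => ExtZero A M (∀ l, T l) 1 ∧
      ∀ u : M →ₗ[A] N, FactorsThroughAdd (∀ l, T l) u)
    { of_subsingleton := fun M _ _ _ =>
        ⟨ExtZero.of_subsingleton_left 1, FactorsThroughAdd.of_subsingleton⟩
      extension := fun s h' h'' => ⟨s.extZero_contravariant₂ h'.1 h''.1,
        FactorsThroughAdd.of_isSES s h''.1 h'.2 h''.2⟩ } ?_
    fun l _ => ⟨hΔT l, hT.factorsThroughAdd_standard hN⟩
  rintro X Y _ _ _ _ hXY ⟨hY, hfactor⟩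
  refine ⟨hY.of_isDirectSummand_left hXY, fun u => ?_⟩
  obtain ⟨i, p, hpi⟩ := hXY
  have hu : (u ∘ₗ p) ∘ₗ i = u := by rw [LinearMap.comp_assoc, hpi, LinearMap.comp_id]
  exact hu ▸ (hfactor (u ∘ₗ p)).comp i

variable [Finite Λ] (hc : IsExtDualFamily R A Λ Δ Nb) (h : SplitQH R A Λ Δ)
include hc h

theorem inFilt_standard_iff :
    InFilt R A Λ Δ Set.univ M ↔ FinProj R A M ∧ ∀ n, ExtZero A M (∀ l, T l) (n + 1) :=
  ⟨fun hM => ⟨hM.finProj fun l _ => h.finProj l,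
    hc.extZero_of_inFilt h hM (hT.inFilt_costandard (hc.finite h))⟩,
    fun ⟨hfin, hext⟩ => hc.inFilt_standard_of_extZero_one h hfin
      fun l => hT.extZero_costandard hext l 0⟩

theorem inFilt_costandard_iff :
    InFilt R A Λ Nb Set.univ N ↔ FinProj R A N ∧ ∀ n, ExtZero A (∀ l, T l) N (n + 1) :=
  ⟨fun hN => ⟨hN.finProj fun l _ => hc.finProj h l,
    hc.extZero_of_inFilt h (hT.inFilt_standard h) hN⟩,
    fun ⟨hfin, hext⟩ => hc.inFilt_costandard_of_extZero_one h hfin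
      fun l => hT.extZero_standard hext l 0⟩

lemma inFilt_of_inAdd (hX : InAdd A (∀ l, T l) X) :
    InFilt R A Λ Δ Set.univ X ∧ InFilt R A Λ Nb Set.univ X := by
  obtain ⟨n, hX⟩ := hX
  obtain ⟨hfin, hext⟩ := (hT.inFilt_standard_iff hc h).1 <|
    (InFilt.isExtensionClosed R A Λ Δ Set.univ).pi (fun _ : Fin n => ∀ l, T l)
      fun _ => hT.inFilt_standard h
  obtain ⟨-, hext'⟩ := (hT.inFilt_costandard_iff hc h).1 <|
    (InFilt.isExtensionClosed R A Λ Nb Set.univ).pi (fun _ : Fin n => ∀ l, T l)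
      fun _ => hT.inFilt_costandard (hc.finite h)
  exact ⟨(hT.inFilt_standard_iff hc h).2
      ⟨hfin.of_isDirectSummand hX, fun i => (hext i).of_isDirectSummand_left hX⟩,
    (hT.inFilt_costandard_iff hc h).2
      ⟨hfin.of_isDirectSummand hX, fun i => (hext' i).of_isDirectSummand_right hX⟩⟩

theorem inAdd_iff :
    InAdd A (∀ l, T l) X ↔ InFilt R A Λ Δ Set.univ X ∧ InFilt R A Λ Nb Set.univ X := by
  refine ⟨hT.inFilt_of_inAdd hc h, fun ⟨hΔ, hNb⟩ => FactorsThroughAdd.inAdd ?_⟩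
  have hext {N : Type} [AddCommGroup N] [Module A N] (hN : InFilt R A Λ Nb Set.univ N) (l : Λ) :
      ExtZero A (Δ l) N 1 := hN.extZero_right fun m _ => hc.extZero_one l m
  exact hT.factorsThroughAdd (hext (hT.inFilt_costandard (hc.finite h))) (hext hNb) hΔ LinearMap.id

end IsCharTilting

end Tilting

theorem characteristic_tilting_determines_filtrations_general
    (R : Type) [CommRing R]
    (A : Type) [Ring A] [Algebra R A]
    (Λ : Type) [Finite Λ] [PartialOrder Λ]
    (Δ : Λ → Type) [∀ l, AddCommGroup (Δ l)] [∀ l, Module R (Δ l)]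
    [∀ l, Module A (Δ l)] [∀ l, IsScalarTower R A (Δ l)]
    (Nb : Λ → Type) [∀ l, AddCommGroup (Nb l)] [∀ l, Module R (Nb l)]
    [∀ l, Module A (Nb l)] [∀ l, IsScalarTower R A (Nb l)]
    (h : SplitQH R A Λ Δ) (hc : IsExtDualFamily R A Λ Δ Nb)
    (T : Λ → Type) [∀ l, AddCommGroup (T l)] [∀ l, Module A (T l)]
    (hT : IsCharTilting R A Λ Δ Nb T) :
    (∀ (M : Type) [AddCommGroup M] [Module R M] [Module A M] [IsScalarTower R A M],
      InFilt R A Λ Δ Set.univ M ↔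
        (Module.Finite A M ∧ Module.Projective R M ∧
          ∀ i : ℕ, 0 < i → extVanish A M (∀ l, T l) i)) ∧
    (∀ (N : Type) [AddCommGroup N] [Module R N] [Module A N] [IsScalarTower R A N],
      InFilt R A Λ Nb Set.univ N ↔
        (Module.Finite A N ∧ Module.Projective R N ∧
          ∀ i : ℕ, 0 < i → extVanish A (∀ l, T l) N i)) ∧
    (∀ (X : Type) [AddCommGroup X] [Module A X],
      InAdd A (∀ l, T l) X ↔
        (InFilt R A Λ Δ Set.univ X ∧ InFilt R A Λ Nb Set.univ X)) := by
  have := h.algFin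
  refine ⟨fun M _ _ _ _ => ?_, fun N _ _ _ _ => ?_, fun X _ _ => hT.inAdd_iff hc h⟩
  · rw [hT.inFilt_standard_iff hc h, finProj_iff_of_finite, and_assoc, forall_extVanish_iff]
  · rw [hT.inFilt_costandard_iff hc h, finProj_iff_of_finite, and_assoc, forall_extVanish_iff]

/-- Let `T = ⊕_λ T(λ)` be a characteristic tilting module. Then:
(a) `F(Δ̃) = {M ∈ A-mod ∩ R-proj : Ext^{i>0}_A(M, T) = 0}`;
(b) `F(∇̃) = {N ∈ A-mod ∩ R-proj : Ext^{i>0}_A(T, N) = 0}`;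
(c) `add T = F(Δ̃) ∩ F(∇̃)`. -/
theorem characteristic_tilting_determines_filtrations
    (R : Type) [CommRing R] [IsNoetherianRing R]
    (A : Type) [Ring A] [Algebra R A]
    (Λ : Type) [Fintype Λ] [PartialOrder Λ]
    (Δ : Λ → Type) [∀ l, AddCommGroup (Δ l)] [∀ l, Module R (Δ l)]
    [∀ l, Module A (Δ l)] [∀ l, IsScalarTower R A (Δ l)]
    (Nb : Λ → Type) [∀ l, AddCommGroup (Nb l)] [∀ l, Module R (Nb l)]
    [∀ l, Module A (Nb l)] [∀ l, IsScalarTower R A (Nb l)]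
    (h : SplitQH R A Λ Δ) (hc : IsCostandard R A Λ Δ Nb)
    (T : Λ → Type) [∀ l, AddCommGroup (T l)] [∀ l, Module A (T l)]
    (hT : IsCharTilting R A Λ Δ Nb T) :
    -- (a)
    (∀ (M : Type) [AddCommGroup M] [Module R M] [Module A M] [IsScalarTower R A M],
      InFilt R A Λ Δ Set.univ M ↔
        (Module.Finite A M ∧ Module.Projective R M ∧
          ∀ i : ℕ, 0 < i → extVanish A M (∀ l, T l) i)) ∧
    -- (b)
    (∀ (N : Type) [AddCommGroup N] [Module R N] [Module A N] [IsScalarTower R A N],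
      InFilt R A Λ Nb Set.univ N ↔
        (Module.Finite A N ∧ Module.Projective R N ∧
          ∀ i : ℕ, 0 < i → extVanish A (∀ l, T l) N i)) ∧
    -- (c)
    (∀ (X : Type) [AddCommGroup X] [Module A X],
      InAdd A (∀ l, T l) X ↔
        (InFilt R A Λ Δ Set.univ X ∧ InFilt R A Λ Nb Set.univ X)) :=
  characteristic_tilting_determines_filtrations_general R A Λ Δ Nb h hc.isExtDualFamily T hT

end
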